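/- arXiv:1806.02456 — 2 statements merged into one kernel-verified Lean document; each statement's English description precedes it below -/
import Mathlib

section
/- Suppose f ∈ H¹(I,ℝⁿ), for each ε > 0 let u_ε be the minimizer of E_ε over H¹(I,ℝⁿ), and let u be a minimizer of the energy E. Then u_ε converges to u in L²(I,ℝⁿ) as ε → 0⁺, i.e. ∫_I ‖u_ε − u‖² → 0 along the filter of ε tending to 0 from the right. -/
open MeasureTheory Set Filter
open scoped ENNReal

noncomputable section

/-- Square-integrability of `w` on the set `S`. -/
def SqIntOn {n : ℕ} (w : ℝ → EuclideanSpace ℝ (Fin n)) (S : Set ℝ) : Prop :=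
  MeasureTheory.IntegrableOn (fun x => ‖w x‖ ^ 2) S

/-- The Rudin–Osher–Fatemi energy with fidelity weight `1/(2 lam)`, datum `f`,
on the interval `I = Ioo a b`. -/
def rofEnergy {n : ℕ} (lam a b : ℝ) (f w : ℝ → EuclideanSpace ℝ (Fin n)) : ℝ≥0∞ :=
  eVariationOn w (Set.Ioo a b) +
    ENNReal.ofReal ((1 / (2 * lam)) * ∫ x in Set.Ioo a b, ‖w x - f x‖ ^ 2)

/-- `u` is a minimizer of the ROF energy among Borel measurable functions
square-integrable on `Ioo a b`. -/
def IsMinimizer {n : ℕ} (lam a b : ℝ) (f u : ℝ → EuclideanSpace ℝ (Fin n)) : Prop :=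
  Measurable u ∧ SqIntOn u (Set.Ioo a b) ∧
    ∀ w : ℝ → EuclideanSpace ℝ (Fin n), Measurable w → SqIntOn w (Set.Ioo a b) →
      rofEnergy lam a b f u ≤ rofEnergy lam a b f w

/-- `w` belongs to `H¹(I, ℝⁿ)` with (weak) derivative `w'`: it is continuous on `[a,b]`,
`w'` is square-integrable on `I = Ioo a b`, and the fundamental theorem of calculus holds. -/
def InH1 {n : ℕ} (a b : ℝ) (w w' : ℝ → EuclideanSpace ℝ (Fin n)) : Prop :=
  ContinuousOn w (Set.Icc a b) ∧
  MeasureTheory.IntegrableOn (fun x => ‖w' x‖ ^ 2) (Set.Ioo a b) ∧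
  ∀ x ∈ Set.Icc a b, ∀ y ∈ Set.Icc a b, w y - w x = ∫ t in x..y, w' t

/-- The regularized energy `E_ε` evaluated at `w ∈ H¹` with derivative `w'`. -/
def regEnergy {n : ℕ} (lam ε a b : ℝ) (f w w' : ℝ → EuclideanSpace ℝ (Fin n)) : ℝ :=
  ∫ x in Set.Ioo a b, ((1 / (2 * lam)) * ‖w x - f x‖ ^ 2
    + Real.sqrt (‖w' x‖ ^ 2 + ε ^ 2) + (ε ^ 2 / 2) * ‖w' x‖ ^ 2)

/-- `u` (with derivative `u'`) minimizes `E_ε` over `H¹(I, ℝⁿ)`. -/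
def IsMinimizerEps {n : ℕ} (lam ε a b : ℝ) (f u u' : ℝ → EuclideanSpace ℝ (Fin n)) : Prop :=
  InH1 a b u u' ∧ ∀ v v' : ℝ → EuclideanSpace ℝ (Fin n), InH1 a b v v' →
    regEnergy lam ε a b f u u' ≤ regEnergy lam ε a b f v v'



lemma aux_repr {n : ℕ} {a b : ℝ} (hab : a < b) {w w' : ℝ → EuclideanSpace ℝ (Fin n)}
    (h : InH1 a b w w') : ∃ w'' : ℝ → EuclideanSpace ℝ (Fin n),
      InH1 a b w w'' ∧ IntervalIntegrable w'' volume a b ∧ ∀ x, ‖w'' x‖ ≤ ‖w' x‖ := by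
  by_cases hi : IntervalIntegrable w' volume a b
  · exact ⟨w', h, hi, fun _ => le_rfl⟩
  · refine ⟨fun _ => 0, ⟨h.1, by simp, ?_⟩, by simp, by simp⟩
    have hA : a ∈ Icc a b := ⟨le_rfl, hab.le⟩
    have hB : b ∈ Icc a b := ⟨hab.le, le_rfl⟩
    have hba : w b = w a := by
      have := h.2.2 a hA b hB
      rw [intervalIntegral.integral_undef hi] at this
      exact sub_eq_zero.1 this
    have key : ∀ z ∈ Icc a b, w z = w a := by
      intro z hz
      by_cases h1 : IntervalIntegrable w' volume a z
      · have h2 : ¬ IntervalIntegrable w' volume z b := fun h2 => hi (h1.trans h2)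
        have := h.2.2 z hz b hB
        rw [intervalIntegral.integral_undef h2] at this
        rw [← hba]; exact (sub_eq_zero.1 this).symm
      · have := h.2.2 a hA z hz
        rw [intervalIntegral.integral_undef h1] at this
        exact sub_eq_zero.1 this
    intro x hx y hy
    simp [key x hx, key y hy]

lemma evar_le_of {n : ℕ} {a b : ℝ} {w w' : ℝ → EuclideanSpace ℝ (Fin n)} (hab : a < b)
    (h : InH1 a b w w') (hi : IntervalIntegrable w' volume a b) :
    eVariationOn w (Ioo a b) ≤ ENNReal.ofReal (∫ x in Ioo a b, ‖w' x‖) := by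
  have hsub : ∀ x ∈ Icc a b, ∀ y ∈ Icc a b, IntervalIntegrable (fun t => ‖w' t‖) volume x y := by
    intro x hx y hy
    refine hi.norm.mono_set ?_
    rw [uIcc_of_le hab.le]
    exact uIcc_subset_Icc hx hy
  set Φ : ℝ → ℝ := fun x => ∫ t in a..x, ‖w' t‖ with hΦ
  have hA : a ∈ Icc a b := ⟨le_rfl, hab.le⟩
  have hB : b ∈ Icc a b := ⟨hab.le, le_rfl⟩
  have hd : ∀ x ∈ Icc a b, ∀ y ∈ Icc a b, Φ y - Φ x = ∫ t in x..y, ‖w' t‖ := by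
    intro x hx y hy
    exact intervalIntegral.integral_interval_sub_left (hsub a hA y hy) (hsub a hA x hx)
  have hmono : MonotoneOn Φ (Icc a b) := by
    intro x hx y hy hxy
    have : 0 ≤ Φ y - Φ x := by
      rw [hd x hx y hy]
      exact intervalIntegral.integral_nonneg hxy (fun _ _ => norm_nonneg _)
    linarith
  calc eVariationOn w (Ioo a b) ≤ eVariationOn w (Icc a b) := eVariationOn.mono _ Ioo_subset_Icc_self
    _ ≤ eVariationOn Φ (Icc a b) := by
      refine iSup_le fun p => ?_
      refine le_trans ?_ (eVariationOn.sum_le (n := p.1) p.2.2.1 p.2.2.2)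
      refine Finset.sum_le_sum fun i _ => ?_
      rw [edist_dist, edist_dist]
      apply ENNReal.ofReal_le_ofReal
      have hx := p.2.2.2 i
      have hy := p.2.2.2 (i+1)
      have hxy := p.2.2.1 (Nat.le_succ i)
      rw [dist_eq_norm, dist_eq_norm, h.2.2 _ hx _ hy, hd _ hx _ hy, Real.norm_eq_abs]
      exact (intervalIntegral.norm_integral_le_integral_norm hxy).trans (le_abs_self _)
    _ ≤ ENNReal.ofReal (Φ b - Φ a) := by
      have := hmono.eVariationOn_le hA hB
      simpa using this
    _ = _ := by
      rw [hd a hA b hB, intervalIntegral.integral_of_le hab.le, integral_Ioc_eq_integral_Ioo]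

lemma moll {n : ℕ} {a b : ℝ} (hab : a < b) {g : ℝ → EuclideanSpace ℝ (Fin n)}
    (hg : Measurable g) (W : ℝ → ℝ) (V : ℝ) (hV : ∀ x y, x ≤ y → W y - W x ≤ V)
    (hgW : ∀ x y, x ≤ y → ‖g y - g x‖ ≤ W y - W x) {h : ℝ} (hh : 0 < h) :
    ∃ v v' : ℝ → EuclideanSpace ℝ (Fin n), InH1 a b v v' ∧ IntervalIntegrable v' volume a b ∧
      (∫ x in Ioo a b, ‖v' x‖) ≤ V ∧ (∫ x in Ioo a b, ‖v x - g x‖ ^ 2) ≤ h * V ^ 2 := by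
  have hV0 : 0 ≤ V := by simpa using hV 0 0 le_rfl
  have hmono : Monotone W := fun x y hxy => by
    have := (norm_nonneg _).trans (hgW x y hxy); linarith
  have hWi : ∀ x y, IntervalIntegrable W volume x y := fun x y => hmono.intervalIntegrable
  have hgb : ∀ x, ‖g x‖ ≤ ‖g 0‖ + V := by
    intro x
    have : ‖g x - g 0‖ ≤ V := by
      rcases le_total 0 x with h0 | h0
      · exact (hgW _ _ h0).trans (hV _ _ h0)
      · rw [norm_sub_rev]; exact (hgW _ _ h0).trans (hV _ _ h0)
    have h2 := norm_add_le (g x - g 0) (g 0)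
    rw [sub_add_cancel] at h2
    linarith
  have bdd_int : ∀ (k : ℝ → EuclideanSpace ℝ (Fin n)) (C : ℝ), Measurable k → (∀ x, ‖k x‖ ≤ C) →
      ∀ x y, IntervalIntegrable k volume x y := by
    intro k C hk hC x y
    refine (intervalIntegrable_const (c := C)).mono_fun hk.aestronglyMeasurable ?_
    exact Eventually.of_forall fun t => (hC t).trans (le_abs_self C)
  have hgi := bdd_int g _ hg hgb
  have hWs : Measurable fun x => W (x + h) - W x :=
    (hmono.measurable.comp (measurable_id.add_const h)).sub hmono.measurable
  have hWsi : ∀ x y, IntervalIntegrable (fun x => W (x + h) - W x) volume x y := by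
    intro x y
    refine IntervalIntegrable.sub ?_ (hWi x y)
    have : Monotone fun x => W (x + h) := fun x y hxy => hmono (by linarith)
    exact this.intervalIntegrable
  have hWint : ∫ x in Ioo a b, (W (x + h) - W x) ≤ h * V := by
    rw [← integral_Ioc_eq_integral_Ioo, ← intervalIntegral.integral_of_le hab.le,
      intervalIntegral.integral_sub _ (hWi _ _), intervalIntegral.integral_comp_add_right,
      intervalIntegral.integral_interval_sub_interval_comm' (hWi _ _) (hWi _ _) (hWi _ _)]
    · have e1 : ∫ x in b..b+h, W x = ∫ x in (0:ℝ)..h, W (x + b) := by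
        rw [intervalIntegral.integral_comp_add_right]; congr 1 <;> ring
      have e2 : ∫ x in a..a+h, W x = ∫ x in (0:ℝ)..h, W (x + a) := by
        rw [intervalIntegral.integral_comp_add_right]; congr 1 <;> ring
      have m1 : ∀ c, Monotone fun x => W (x + c) := fun c x y hxy => hmono (by linarith)
      have : ∫ x in (0:ℝ)..h, (W (x + b) - W (x + a)) ≤ ∫ x in (0:ℝ)..h, V := by
        refine intervalIntegral.integral_mono_on hh.le
          ((m1 b).intervalIntegrable.sub (m1 a).intervalIntegrable) (by simp) ?_
        intro x _
        exact hV _ _ (by linarith)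
      rw [intervalIntegral.integral_sub (m1 b).intervalIntegrable (m1 a).intervalIntegrable] at this
      simp only [intervalIntegral.integral_const, sub_zero, smul_eq_mul] at this
      linarith
    · have : Monotone fun x => W (x + h) := fun x y hxy => hmono (by linarith)
      exact this.intervalIntegrable
  have hWI : IntegrableOn (fun x => W (x + h) - W x) (Ioo a b) :=
    ((intervalIntegrable_iff_integrableOn_Ioo_of_le hab.le).1 (hWsi a b))
  have hv'm : Measurable fun x => h⁻¹ • (g (x + h) - g x) :=
    by fun_prop
  have hv'b : ∀ x, ‖h⁻¹ • (g (x + h) - g x)‖ ≤ h⁻¹ * (W (x + h) - W x) := by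
    intro x
    rw [norm_smul, Real.norm_of_nonneg (inv_nonneg.2 hh.le)]
    exact mul_le_mul_of_nonneg_left (hgW _ _ (by linarith)) (inv_nonneg.2 hh.le)
  have hv'c : ∀ x, ‖h⁻¹ • (g (x + h) - g x)‖ ≤ h⁻¹ * V := fun x =>
    (hv'b x).trans (mul_le_mul_of_nonneg_left (hV _ _ (by linarith)) (inv_nonneg.2 hh.le))
  have hv'i := bdd_int _ _ hv'm hv'c
  have ftc : ∀ x y, h⁻¹ • (∫ t in y..y+h, g t) - h⁻¹ • (∫ t in x..x+h, g t)
      = ∫ t in x..y, h⁻¹ • (g (t + h) - g t) := by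
    intro x y
    have hs : IntervalIntegrable (fun t => g (t + h)) volume x y :=
      bdd_int _ _ (hg.comp (measurable_id.add_const h)) (fun t => hgb _) _ _
    rw [intervalIntegral.integral_smul, intervalIntegral.integral_sub hs (hgi _ _),
      intervalIntegral.integral_comp_add_right, ← smul_sub,
      intervalIntegral.integral_interval_sub_interval_comm' (hgi _ _) (hgi _ _) (hgi _ _)]
  refine ⟨fun x => h⁻¹ • ∫ t in x..x+h, g t, fun x => h⁻¹ • (g (x + h) - g x),
    ⟨?_, ?_, fun x _ y _ => ftc x y⟩, hv'i a b, ?_, ?_⟩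
  · have hc : Continuous fun x => ∫ t in (0:ℝ)..x, h⁻¹ • (g (t + h) - g t) :=
      intervalIntegral.continuous_primitive hv'i 0
    have : (fun x => h⁻¹ • ∫ t in x..x+h, g t) = fun x => (h⁻¹ • ∫ t in (0:ℝ)..0+h, g t) +
        ∫ t in (0:ℝ)..x, h⁻¹ • (g (t + h) - g t) := by
      funext x; rw [← ftc 0 x]; abel
    rw [this]
    exact (continuous_const.add hc).continuousOn
  · refine Measure.integrableOn_of_bounded (M := (h⁻¹ * V)^2) (by simp) (hv'm.norm.pow_const 2).aestronglyMeasurable ?_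
    refine Eventually.of_forall fun x => ?_
    rw [norm_pow, norm_norm]
    exact pow_le_pow_left₀ (norm_nonneg _) (hv'c x) 2
  · calc _ ≤ ∫ x in Ioo a b, h⁻¹ * (W (x + h) - W x) := by
          refine integral_mono_of_nonneg (Eventually.of_forall fun _ => norm_nonneg _) (hWI.const_mul _)
            (Eventually.of_forall hv'b)
      _ ≤ h⁻¹ * (h * V) := by
          rw [integral_const_mul]
          exact mul_le_mul_of_nonneg_left hWint (inv_nonneg.2 hh.le)
      _ = V := by field_simp
  · have hp : ∀ x, ‖(h⁻¹ • ∫ t in x..x+h, g t) - g x‖ ≤ W (x + h) - W x := by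
      intro x
      have e : (h⁻¹ • ∫ t in x..x+h, g t) - g x = h⁻¹ • ∫ t in x..x+h, (g t - g x) := by
        rw [intervalIntegral.integral_sub (hgi _ _) (by simp), intervalIntegral.integral_const,
          smul_sub, add_sub_cancel_left, inv_smul_smul₀ hh.ne']
      rw [e, norm_smul, Real.norm_of_nonneg (inv_nonneg.2 hh.le)]
      have := intervalIntegral.norm_integral_le_of_norm_le_const (a := x) (b := x + h)
        (f := fun t => g t - g x) (C := W (x + h) - W x) (by
          intro t ht
          rw [uIoc_of_le (by linarith)] at ht
          exact (hgW _ _ ht.1.le).trans (by linarith [hmono ht.2]))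
      rw [add_sub_cancel_left, abs_of_pos hh] at this
      calc _ ≤ h⁻¹ * ((W (x + h) - W x) * h) := mul_le_mul_of_nonneg_left this (inv_nonneg.2 hh.le)
        _ = _ := by field_simp
    calc _ ≤ ∫ x in Ioo a b, V * (W (x + h) - W x) := by
          refine integral_mono_of_nonneg (Eventually.of_forall fun _ => by positivity) (hWI.const_mul _)
            (Eventually.of_forall fun x => ?_)
          have h1 := hp x
          have h2 := hV x (x + h) (by linarith)
          have h3 := norm_nonneg ((h⁻¹ • ∫ t in x..x+h, g t) - g x)
          simp only
          nlinarith
      _ ≤ V * (h * V) := by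
          rw [integral_const_mul]
          exact mul_le_mul_of_nonneg_left hWint hV0
      _ = _ := by ring

lemma memLp_of_cont {n : ℕ} {a b : ℝ} {w : ℝ → EuclideanSpace ℝ (Fin n)}
    (h : ContinuousOn w (Icc a b)) : MemLp w 2 (volume.restrict (Ioo a b)) := by
  rw [memLp_two_iff_integrable_sq_norm]
  · exact ((h.norm.pow 2).integrableOn_Icc).mono_set Ioo_subset_Icc_self
  · exact (h.mono Ioo_subset_Icc_self).aestronglyMeasurable measurableSet_Ioo

lemma recov {n : ℕ} {a b : ℝ} (hab : a < b) {u : ℝ → EuclideanSpace ℝ (Fin n)}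
    (hu : Measurable u) (hb : eVariationOn u (Ioo a b) ≠ ⊤)
    (hsq : SqIntOn u (Ioo a b)) {η : ℝ} (hη : 0 < η) :
    ∃ v v' : ℝ → EuclideanSpace ℝ (Fin n), InH1 a b v v' ∧ IntervalIntegrable v' volume a b ∧
      (∫ x in Ioo a b, ‖v' x‖) ≤ (eVariationOn u (Ioo a b)).toReal ∧
      (∫ x in Ioo a b, ‖v x - u x‖ ^ 2) ≤ η := by
  set V := (eVariationOn u (Ioo a b)).toReal with hVdef
  have hV0 : 0 ≤ V := ENNReal.toReal_nonneg
  have huL : MemLp u 2 (volume.restrict (Ioo a b)) :=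
    (memLp_two_iff_integrable_sq_norm hu.aestronglyMeasurable).2 hsq
  set c : ℝ → ℝ → ℝ := fun δ x => max (a + δ) (min (b - δ) x) with hc
  have hcm : ∀ δ, Monotone (c δ) := fun δ x y hxy => by
    simp only [hc]; gcongr
  have hcI : ∀ δ, 0 < δ → δ < (b - a) / 2 → ∀ x, c δ x ∈ Ioo a b := by
    intro δ h0 h1 x
    constructor
    · exact lt_of_lt_of_le (by linarith) (le_max_left _ _)
    · exact max_lt (by linarith) (lt_of_le_of_lt (min_le_left _ _) (by linarith))
  have hdist : ∀ x ∈ Ioo a b, ∀ y ∈ Ioo a b, ‖u x - u y‖ ≤ V := by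
    intro x hx y hy
    rw [← dist_eq_norm]
    exact BoundedVariationOn.dist_le hb hx hy
  -- L2 convergence of the clamped functions
  have hpos : ∀ᶠ δ in nhdsWithin (0:ℝ) (Ioi 0), 0 < δ ∧ δ < (b - a) / 2 := by
    have : Ioo (0:ℝ) ((b-a)/2) ∈ nhdsWithin (0:ℝ) (Ioi 0) := Ioo_mem_nhdsGT (by linarith)
    exact this
  have hcmeas : ∀ δ, Measurable (c δ) := fun δ => (hcm δ).measurable
  have hlim : Tendsto (fun δ => ∫ x in Ioo a b, ‖u (c δ x) - u x‖ ^ 2) (nhdsWithin (0:ℝ) (Ioi 0))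
      (nhds (∫ x in Ioo a b, (0:ℝ))) := by
    refine tendsto_integral_filter_of_dominated_convergence (fun _ => V ^ 2) ?_ ?_ (by simp) ?_
    · refine Eventually.of_forall fun δ => ?_
      exact (((hu.comp (hcmeas δ)).sub hu).norm.pow_const 2).aestronglyMeasurable
    · filter_upwards [hpos] with δ hδ
      filter_upwards [ae_restrict_mem measurableSet_Ioo] with x hx
      rw [norm_pow, norm_norm]
      exact pow_le_pow_left₀ (norm_nonneg _) (hdist _ (hcI δ hδ.1 hδ.2 x) _ hx) 2
    · filter_upwards [ae_restrict_mem measurableSet_Ioo] with x hx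
      refine tendsto_const_nhds.congr' ?_
      have : Ioo (0:ℝ) (min (x - a) (b - x)) ∈ nhdsWithin (0:ℝ) (Ioi 0) :=
        Ioo_mem_nhdsGT (lt_min (by linarith [hx.1]) (by linarith [hx.2]))
      filter_upwards [this] with δ hδ
      have h1 := hδ.2.trans_le (min_le_left _ _)
      have h2 := hδ.2.trans_le (min_le_right _ _)
      have : c δ x = x := by
        simp only [hc]
        rw [min_eq_right (by linarith), max_eq_right (by linarith)]
      simp [this]
  simp only [integral_zero] at hlim
  obtain ⟨δ, hδ, hδ0, hδ1⟩ := ((hlim.eventually (gt_mem_nhds (show (0:ℝ) < η / 4 by linarith))).and hpos).exists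
  set g : ℝ → EuclideanSpace ℝ (Fin n) := u ∘ c δ with hg
  have hgm : Measurable g := hu.comp (hcmeas δ)
  have hgv : eVariationOn g univ ≤ eVariationOn u (Ioo a b) :=
    eVariationOn.comp_le_of_monotoneOn u (c δ) ((hcm δ).monotoneOn _) (fun x _ => hcI δ hδ0 hδ1 x)
  have hgb : BoundedVariationOn g univ := ne_top_of_le_ne_top hb hgv
  have hgl := hgb.locallyBoundedVariationOn
  have hW : ∀ x y, variationOnFromTo g univ 0 y - variationOnFromTo g univ 0 x
      = variationOnFromTo g univ x y := by
    intro x y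
    have := variationOnFromTo.add hgl (mem_univ (0:ℝ)) (mem_univ x) (mem_univ y)
    linarith
  obtain ⟨v, v', h1, h2, h3, h4⟩ := moll hab hgm (variationOnFromTo g univ 0) V
    (by
      intro x y hxy
      rw [hW, variationOnFromTo.eq_of_le _ _ hxy]
      exact ENNReal.toReal_mono hb ((eVariationOn.mono _ inter_subset_left).trans hgv))
    (by
      intro x y hxy
      rw [hW, variationOnFromTo.eq_of_le _ _ hxy, ← dist_eq_norm]
      exact BoundedVariationOn.dist_le (hgb.mono inter_subset_left) ⟨mem_univ _, hxy, le_rfl⟩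
        ⟨mem_univ _, le_rfl, hxy⟩)
    (h := η / (4 * (V ^ 2 + 1))) (by positivity)
  refine ⟨v, v', h1, h2, h3, ?_⟩
  have h5 : η / (4 * (V ^ 2 + 1)) * V ^ 2 ≤ η / 4 := by
    rw [div_mul_eq_mul_div, div_le_div_iff₀ (by positivity) (by positivity)]
    nlinarith [sq_nonneg V]
  have hvL := memLp_of_cont h1.1
  have hgL : MemLp g 2 (volume.restrict (Ioo a b)) := by
    refine MemLp.of_bound hgm.aestronglyMeasurable (‖u ((a+b)/2)‖ + V) (Eventually.of_forall fun x => ?_)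
    have := hdist _ (hcI δ hδ0 hδ1 x) ((a+b)/2) ⟨by linarith, by linarith⟩
    have h6 := norm_add_le (u (c δ x) - u ((a+b)/2)) (u ((a+b)/2))
    rw [sub_add_cancel] at h6
    simp only [hg, Function.comp]
    linarith
  have i1 : Integrable (fun x => ‖v x - g x‖ ^ 2) (volume.restrict (Ioo a b)) :=
    (hvL.sub hgL).integrable_norm_pow (by norm_num)
  have i2 : Integrable (fun x => ‖g x - u x‖ ^ 2) (volume.restrict (Ioo a b)) :=
    (hgL.sub huL).integrable_norm_pow (by norm_num)
  calc (∫ x in Ioo a b, ‖v x - u x‖ ^ 2) ≤ ∫ x in Ioo a b, (2 * ‖v x - g x‖ ^ 2 + 2 * ‖g x - u x‖ ^ 2) := by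
        refine integral_mono_of_nonneg (Eventually.of_forall fun _ => by positivity)
          ((i1.const_mul 2).add (i2.const_mul 2)) (Eventually.of_forall fun x => ?_)
        have h7 := norm_add_le (v x - g x) (g x - u x)
        rw [sub_add_sub_cancel] at h7
        have := norm_nonneg (v x - u x)
        simp only
        nlinarith [sq_nonneg (‖v x - g x‖ - ‖g x - u x‖)]
    _ = 2 * (∫ x in Ioo a b, ‖v x - g x‖ ^ 2) + 2 * ∫ x in Ioo a b, ‖g x - u x‖ ^ 2 := by
        rw [integral_add (i1.const_mul 2) (i2.const_mul 2), integral_const_mul, integral_const_mul]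
    _ ≤ η := by
        have : (∫ x in Ioo a b, ‖g x - u x‖ ^ 2) < η / 4 := hδ
        linarith

lemma evar_mid {n : ℕ} {S : Set ℝ} {u w : ℝ → EuclideanSpace ℝ (Fin n)} {V Vw : ℝ}
    (h0 : 0 ≤ V) (h1 : 0 ≤ Vw)
    (hu : eVariationOn u S ≤ ENNReal.ofReal V) (hw : eVariationOn w S ≤ ENNReal.ofReal Vw) :
    eVariationOn (fun x => (1/2 : ℝ) • (u x + w x)) S ≤ ENNReal.ofReal ((V + Vw) / 2) := by
  refine iSup_le fun p => ?_
  have hu' := (eVariationOn.sum_le (f := u) (n := p.1) p.2.2.1 p.2.2.2).trans hu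
  have hw' := (eVariationOn.sum_le (f := w) (n := p.1) p.2.2.1 p.2.2.2).trans hw
  simp only [edist_dist] at hu' hw' ⊢
  rw [← ENNReal.ofReal_sum_of_nonneg (fun _ _ => dist_nonneg)] at hu' hw' ⊢
  rw [ENNReal.ofReal_le_ofReal_iff h0] at hu'
  rw [ENNReal.ofReal_le_ofReal_iff h1] at hw'
  apply ENNReal.ofReal_le_ofReal
  refine le_trans ?_ (div_le_div_of_nonneg_right (add_le_add hu' hw') zero_le_two)
  rw [← Finset.sum_add_distrib, Finset.sum_div]
  refine Finset.sum_le_sum fun i _ => ?_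
  simp only [dist_eq_norm]
  rw [← smul_sub, norm_smul, add_sub_add_comm]
  have := norm_add_le (u (p.2.1 (i+1)) - u (p.2.1 i)) (w (p.2.1 (i+1)) - w (p.2.1 i))
  rw [Real.norm_of_nonneg (by norm_num)]
  linarith

lemma strong {n : ℕ} {a b lam : ℝ} (hab : a < b) (hlam : 0 < lam)
    {f u w : ℝ → EuclideanSpace ℝ (Fin n)} (hf : MemLp f 2 (volume.restrict (Ioo a b)))
    (hu : IsMinimizer lam a b f u) (hb : eVariationOn u (Ioo a b) ≠ ⊤)
    (hwc : ContinuousOn w (Icc a b)) {Vw : ℝ} (hVw : 0 ≤ Vw)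
    (hw : eVariationOn w (Ioo a b) ≤ ENNReal.ofReal Vw) :
    (∫ x in Ioo a b, ‖w x - u x‖ ^ 2) ≤ 4 * lam *
      ((Vw + (1 / (2 * lam)) * ∫ x in Ioo a b, ‖w x - f x‖ ^ 2) -
       ((eVariationOn u (Ioo a b)).toReal + (1 / (2 * lam)) * ∫ x in Ioo a b, ‖u x - f x‖ ^ 2)) := by
  obtain ⟨hum, hus, hmin⟩ := hu
  set V := (eVariationOn u (Ioo a b)).toReal with hVdef
  have hV0 : 0 ≤ V := ENNReal.toReal_nonneg
  have hVe : eVariationOn u (Ioo a b) = ENNReal.ofReal V := (ENNReal.ofReal_toReal hb).symm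
  have huL : MemLp u 2 (volume.restrict (Ioo a b)) :=
    (memLp_two_iff_integrable_sq_norm hum.aestronglyMeasurable).2 hus
  have hwL := memLp_of_cont hwc
  set m : ℝ → EuclideanSpace ℝ (Fin n) := fun x => (1/2 : ℝ) • (u x + w x) with hm
  have hmL : MemLp m 2 (volume.restrict (Ioo a b)) := (huL.add hwL).const_smul (1/2 : ℝ)
  set w0 : ℝ → EuclideanSpace ℝ (Fin n) := (Ioo a b).indicator w with hw0
  have hw0m : Measurable w0 := by
    have h1 : ContinuousOn w (Ioo a b) := hwc.mono Ioo_subset_Icc_self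
    rw [hw0, ← Set.piecewise_eq_indicator]
    exact h1.measurable_piecewise continuousOn_const measurableSet_Ioo
  set m0 : ℝ → EuclideanSpace ℝ (Fin n) := fun x => (1/2 : ℝ) • (u x + w0 x) with hm0
  have hm0m : Measurable m0 := by fun_prop
  have heq : EqOn m0 m (Ioo a b) := fun x hx => by simp [hm0, hm, hw0, hx]
  have hms : SqIntOn m0 (Ioo a b) := by
    refine (hmL.integrable_norm_pow (by norm_num)).congr ?_
    filter_upwards [ae_restrict_mem measurableSet_Ioo] with x hx
    simp [heq hx]
  have key := hmin m0 hm0m hms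
  unfold rofEnergy at key
  have hmv := evar_mid hV0 hVw hVe.le hw
  have e1 : ∫ x in Ioo a b, ‖m0 x - f x‖ ^ 2 = ∫ x in Ioo a b, ‖m x - f x‖ ^ 2 :=
    setIntegral_congr_fun measurableSet_Ioo fun x hx => by simp [heq hx]
  rw [eVariationOn.congr heq, e1, hVe] at key
  have nn : ∀ k : ℝ → EuclideanSpace ℝ (Fin n), 0 ≤ (1 / (2 * lam)) * ∫ x in Ioo a b, ‖k x - f x‖ ^ 2 :=
    fun k => mul_nonneg (by positivity) (integral_nonneg fun x => by positivity)
  have key2 := key.trans (add_le_add_left hmv _)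
  rw [← ENNReal.ofReal_add hV0 (nn u), ← ENNReal.ofReal_add (by linarith) (nn m),
    ENNReal.ofReal_le_ofReal_iff (by have := nn m; linarith)] at key2
  have i1 : Integrable (fun x => ‖u x - f x‖ ^ 2) (volume.restrict (Ioo a b)) :=
    (huL.sub hf).integrable_norm_pow (by norm_num)
  have i2 : Integrable (fun x => ‖w x - f x‖ ^ 2) (volume.restrict (Ioo a b)) :=
    (hwL.sub hf).integrable_norm_pow (by norm_num)
  have i3 : Integrable (fun x => ‖w x - u x‖ ^ 2) (volume.restrict (Ioo a b)) :=
    (hwL.sub huL).integrable_norm_pow (by norm_num)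
  have e2 : ∫ x in Ioo a b, ‖m x - f x‖ ^ 2 = (1/2) * (∫ x in Ioo a b, ‖u x - f x‖ ^ 2) +
      (1/2) * (∫ x in Ioo a b, ‖w x - f x‖ ^ 2) - (1/4) * ∫ x in Ioo a b, ‖w x - u x‖ ^ 2 := by
    have i12 : Integrable (fun x => (1/2) * ‖u x - f x‖ ^ 2 + (1/2) * ‖w x - f x‖ ^ 2)
      (volume.restrict (Ioo a b)) := (i1.const_mul _).add (i2.const_mul _)
    rw [← integral_const_mul, ← integral_const_mul, ← integral_const_mul,
      ← integral_add (i1.const_mul _) (i2.const_mul _),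
      ← integral_sub i12 (i3.const_mul _)]
    refine integral_congr_ae (Eventually.of_forall fun x => ?_)
    have p := parallelogram_law_with_norm ℝ (w x - f x) (u x - f x)
    have q1 : (w x - f x) + (u x - f x) = (2:ℝ) • (m x - f x) := by
      simp only [hm, smul_sub, smul_smul]; norm_num [two_smul]; abel
    have q2 : (w x - f x) - (u x - f x) = w x - u x := by abel
    rw [q1, q2, norm_smul, Real.norm_of_nonneg (by norm_num)] at p
    simp only
    linarith
  rw [e2] at key2
  have hc : lam * (1 / (2 * lam)) = 1 / 2 := by field_simp
  set A := ∫ x in Ioo a b, ‖u x - f x‖ ^ 2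
  set B := ∫ x in Ioo a b, ‖w x - f x‖ ^ 2
  set D := ∫ x in Ioo a b, ‖w x - u x‖ ^ 2
  have k3 := mul_le_mul_of_nonneg_left key2 hlam.le
  have r1 : lam * (V + 1 / (2 * lam) * A) = lam * V + A / 2 := by
    rw [mul_add, ← mul_assoc, hc]; ring
  have r2 : lam * ((V + Vw) / 2 + 1 / (2 * lam) * (1 / 2 * A + 1 / 2 * B - 1 / 4 * D)) =
      lam * V / 2 + lam * Vw / 2 + (1 / 2 * A + 1 / 2 * B - 1 / 4 * D) / 2 := by
    rw [mul_add, ← mul_assoc, hc]; ring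
  have r3 : 4 * lam * (Vw + 1 / (2 * lam) * B - (V + 1 / (2 * lam) * A)) =
     4 * (lam * Vw) - 4 * (lam * V) + 2 * B - 2 * A := by
    field_simp; ring
  rw [r1, r2] at k3
  rw [r3]
  linarith

lemma reg_int {n : ℕ} {a b lam ε : ℝ}
    {f w w' : ℝ → EuclideanSpace ℝ (Fin n)} (hf : MemLp f 2 (volume.restrict (Ioo a b)))
    (hw : InH1 a b w w') :
    Integrable (fun x => (1 / (2 * lam)) * ‖w x - f x‖ ^ 2
    + Real.sqrt (‖w' x‖ ^ 2 + ε ^ 2) + (ε ^ 2 / 2) * ‖w' x‖ ^ 2) (volume.restrict (Ioo a b)) := by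
  have hwL := memLp_of_cont hw.1
  have i2 : Integrable (fun x => ‖w x - f x‖ ^ 2) (volume.restrict (Ioo a b)) :=
    (hwL.sub hf).integrable_norm_pow (by norm_num)
  have i3 : Integrable (fun x => ‖w' x‖ ^ 2) (volume.restrict (Ioo a b)) := hw.2.1
  refine ((i2.const_mul _).add ?_).add (i3.const_mul _)
  refine Integrable.mono' ((i3.add (integrable_const (ε ^ 2))).add (integrable_const 1))
    (Real.continuous_sqrt.comp_aestronglyMeasurable
      (i3.aestronglyMeasurable.add aestronglyMeasurable_const)) (Eventually.of_forall fun x => ?_)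
  rw [Real.norm_of_nonneg (Real.sqrt_nonneg _)]
  simp only [Pi.add_apply]
  apply Real.sqrt_le_iff.2
  constructor
  · positivity
  · nlinarith [sq_nonneg (‖w' x‖ ^ 2 + ε ^ 2), sq_nonneg ‖w' x‖, sq_nonneg ε]

lemma reg_lower {n : ℕ} {a b lam ε : ℝ}
    {f w w' w'' : ℝ → EuclideanSpace ℝ (Fin n)} (hf : MemLp f 2 (volume.restrict (Ioo a b)))
    (hw : InH1 a b w w') (hi : IntegrableOn w'' (Ioo a b)) (hle : ∀ x, ‖w'' x‖ ≤ ‖w' x‖) :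
    (∫ x in Ioo a b, ‖w'' x‖) + (1 / (2 * lam)) * (∫ x in Ioo a b, ‖w x - f x‖ ^ 2)
      ≤ regEnergy lam ε a b f w w' := by
  have hwL := memLp_of_cont hw.1
  have i2 : Integrable (fun x => ‖w x - f x‖ ^ 2) (volume.restrict (Ioo a b)) :=
    (hwL.sub hf).integrable_norm_pow (by norm_num)
  have i1 : Integrable (fun x => ‖w'' x‖) (volume.restrict (Ioo a b)) := hi.norm
  unfold regEnergy
  rw [← integral_const_mul, ← integral_add i1 (i2.const_mul _)]
  refine integral_mono (i1.add (i2.const_mul _)) (reg_int hf hw) fun x => ?_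
  have : ‖w' x‖ ≤ Real.sqrt (‖w' x‖ ^ 2 + ε ^ 2) := Real.le_sqrt_of_sq_le (by nlinarith [sq_nonneg ε])
  have h2 : 0 ≤ (ε ^ 2 / 2) * ‖w' x‖ ^ 2 := by positivity
  have := hle x
  simp only
  linarith

lemma reg_upper {n : ℕ} {a b lam ε : ℝ} (hab : a < b) (hε : 0 < ε)
    {f w w' : ℝ → EuclideanSpace ℝ (Fin n)} (hf : MemLp f 2 (volume.restrict (Ioo a b)))
    (hw : InH1 a b w w') (hi : IntegrableOn w' (Ioo a b)) :
    regEnergy lam ε a b f w w' ≤ (∫ x in Ioo a b, ‖w' x‖) +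
      (1 / (2 * lam)) * (∫ x in Ioo a b, ‖w x - f x‖ ^ 2) + (ε * (b - a) +
        (ε ^ 2 / 2) * ∫ x in Ioo a b, ‖w' x‖ ^ 2) := by
  have hwL := memLp_of_cont hw.1
  have i2 : Integrable (fun x => ‖w x - f x‖ ^ 2) (volume.restrict (Ioo a b)) :=
    (hwL.sub hf).integrable_norm_pow (by norm_num)
  have i1 : Integrable (fun x => ‖w' x‖) (volume.restrict (Ioo a b)) := hi.norm
  have i3 : Integrable (fun x => ‖w' x‖ ^ 2) (volume.restrict (Ioo a b)) := hw.2.1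
  have i4 : Integrable (fun _ => ε) (volume.restrict (Ioo a b)) := integrable_const _
  have ec : ε * (b - a) = ∫ x in Ioo a b, ε := by
    simp [hab.le, mul_comm]
  have i12 : Integrable (fun x => ‖w' x‖ + (1 / (2 * lam)) * ‖w x - f x‖ ^ 2)
      (volume.restrict (Ioo a b)) := i1.add (i2.const_mul _)
  have i34 : Integrable (fun x => ε + (ε ^ 2 / 2) * ‖w' x‖ ^ 2)
      (volume.restrict (Ioo a b)) := i4.add (i3.const_mul _)
  unfold regEnergy
  rw [← integral_const_mul, ec, ← integral_const_mul, ← integral_add i1 (i2.const_mul _),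
    ← integral_add i4 (i3.const_mul _),
    ← integral_add i12 i34]
  refine integral_mono (reg_int hf hw) (i12.add i34)
    fun x => ?_
  have : Real.sqrt (‖w' x‖ ^ 2 + ε ^ 2) ≤ ‖w' x‖ + ε := by
    apply Real.sqrt_le_iff.2
    have := norm_nonneg (w' x)
    constructor
    · positivity
    · nlinarith
  simp only
  linarith

/-- for `f ∈ H¹(I,ℝⁿ)`, the minimizers `u_ε` of `E_ε` converge in `L²(I,ℝⁿ)`
to the ROF minimizer `u` as `ε → 0⁺`. -/
theorem minimizerEps_tendsto_rof_minimizer_L2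
    {n : ℕ} (hn : 1 ≤ n) (a b : ℝ) (hab : a < b) (lam : ℝ) (hlam : 0 < lam)
    (f f' : ℝ → EuclideanSpace ℝ (Fin n)) (hf_meas : Measurable f)
    (hf_sq : SqIntOn f (Set.Ioo a b)) (hf : InH1 a b f f')
    (uε uε' : ℝ → ℝ → EuclideanSpace ℝ (Fin n))
    (huε : ∀ ε : ℝ, 0 < ε → IsMinimizerEps lam ε a b f (uε ε) (uε' ε))
    (u : ℝ → EuclideanSpace ℝ (Fin n)) (hu : IsMinimizer lam a b f u) :
    Filter.Tendsto (fun ε : ℝ => ∫ x in Set.Ioo a b, ‖uε ε x - u x‖ ^ 2)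
      (nhdsWithin 0 (Set.Ioi 0)) (nhds 0) := by
  have hfL : MemLp f 2 (volume.restrict (Ioo a b)) :=
    (memLp_two_iff_integrable_sq_norm hf_meas.aestronglyMeasurable).2 hf_sq
  have hb : eVariationOn u (Ioo a b) ≠ ⊤ := by
    have h0 := hu.2.2 (fun _ => 0) measurable_const (by simp [SqIntOn])
    have h1 : eVariationOn (fun _ : ℝ => (0 : EuclideanSpace ℝ (Fin n))) (Ioo a b) = 0 :=
      eVariationOn.constant_on (by
        rintro _ ⟨x, _, rfl⟩ _ ⟨y, _, rfl⟩
        rfl)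
    unfold rofEnergy at h0
    rw [h1, zero_add] at h0
    exact ne_top_of_le_ne_top ENNReal.ofReal_ne_top (le_self_add.trans h0)
  have huL : MemLp u 2 (volume.restrict (Ioo a b)) :=
    (memLp_two_iff_integrable_sq_norm hu.1.aestronglyMeasurable).2 hu.2.1
  have i1 : Integrable (fun x => ‖u x - f x‖ ^ 2) (volume.restrict (Ioo a b)) :=
    (huL.sub hfL).integrable_norm_pow (by norm_num)
  set F := ∫ x in Ioo a b, ‖u x - f x‖ ^ 2 with hF
  have hF0 : 0 ≤ F := integral_nonneg fun x => by positivity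
  rw [Metric.tendsto_nhds]
  intro ρ hρ
  set t := ρ / (8 * (F + 1)) with ht
  have ht0 : 0 < t := by positivity
  have htF : 2 * (t * F) ≤ ρ / 4 := by
    rw [ht, div_mul_eq_mul_div, mul_div_assoc', div_le_div_iff₀ (by positivity) (by norm_num)]
    nlinarith
  set η := ρ / (8 * (1 + 1 / t)) with hη
  have hη0 : 0 < η := by positivity
  have hηt : 2 * ((1 + 1 / t) * η) = ρ / 4 := by
    rw [hη]; field_simp; ring
  obtain ⟨v, v', hv, hvi, hvV, hvu⟩ := recov hab hu.1 hb hu.2.1 hη0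
  have hvL := memLp_of_cont hv.1
  have i2 : Integrable (fun x => ‖v x - u x‖ ^ 2) (volume.restrict (Ioo a b)) :=
    (hvL.sub huL).integrable_norm_pow (by norm_num)
  have hFv : ∫ x in Ioo a b, ‖v x - f x‖ ^ 2 ≤ (1 + t) * F + (1 + 1 / t) * η := by
    calc _ ≤ ∫ x in Ioo a b, ((1 + t) * ‖u x - f x‖ ^ 2 + (1 + 1 / t) * ‖v x - u x‖ ^ 2) := by
          refine integral_mono_of_nonneg (Eventually.of_forall fun _ => by positivity)
            ((i1.const_mul _).add (i2.const_mul _)) (Eventually.of_forall fun x => ?_)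
          have h7 := norm_add_le (v x - u x) (u x - f x)
          rw [sub_add_sub_cancel] at h7
          simp only
          set p := ‖u x - f x‖
          set q := ‖v x - u x‖
          have h8 : ‖v x - f x‖ ^ 2 ≤ (q + p) ^ 2 := pow_le_pow_left₀ (norm_nonneg _) h7 2
          have h9 : (1 + t) * p ^ 2 + (1 + 1 / t) * q ^ 2 - (q + p) ^ 2 = (t * p - q) ^ 2 / t := by
            field_simp; ring
          have h10 : 0 ≤ (t * p - q) ^ 2 / t := by positivity
          linarith
      _ = (1 + t) * F + (1 + 1 / t) * ∫ x in Ioo a b, ‖v x - u x‖ ^ 2 := by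
          rw [integral_add (i1.const_mul _) (i2.const_mul _), integral_const_mul, integral_const_mul]
      _ ≤ _ := by gcongr
  set C := ∫ x in Ioo a b, ‖v' x‖ ^ 2 with hC
  have hlim : Tendsto (fun ε : ℝ => 4 * lam * (ε * (b - a) + (ε ^ 2 / 2) * C))
      (nhdsWithin 0 (Ioi 0)) (nhds 0) := by
    have : Continuous (fun ε : ℝ => 4 * lam * (ε * (b - a) + (ε ^ 2 / 2) * C)) := by fun_prop
    have h := this.tendsto 0
    simp only [zero_mul, ne_eq, OfNat.ofNat_ne_zero, not_false_eq_true, zero_pow, zero_div, add_zero, mul_zero] at h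
    exact h.mono_left nhdsWithin_le_nhds
  filter_upwards [hlim.eventually (gt_mem_nhds (show (0:ℝ) < ρ / 4 by linarith)),
    self_mem_nhdsWithin] with ε hε hε0
  have hε0 : 0 < ε := hε0
  obtain ⟨hw, hwmin⟩ := huε ε hε0
  obtain ⟨w'', hw2, hwi, hwle⟩ := aux_repr hab hw
  have hwi' := (intervalIntegrable_iff_integrableOn_Ioo_of_le hab.le).1 hwi
  have hvi' := (intervalIntegrable_iff_integrableOn_Ioo_of_le hab.le).1 hvi
  have s1 := strong hab hlam hfL hu hb hw.1 (integral_nonneg fun _ => norm_nonneg _)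
    (evar_le_of hab hw2 hwi)
  have s2 := reg_lower (lam := lam) (ε := ε) hfL hw hwi' hwle
  have s3 := reg_upper (lam := lam) hab hε0 hfL hv hvi'
  have s4 := hwmin v v' hv
  rw [Real.dist_0_eq_abs, abs_of_nonneg (integral_nonneg fun x => by positivity)]
  have s5 : (1 / (2 * lam)) * (∫ x in Ioo a b, ‖v x - f x‖ ^ 2) ≤
      (1 / (2 * lam)) * ((1 + t) * F + (1 + 1 / t) * η) :=
    mul_le_mul_of_nonneg_left hFv (by positivity)
  refine s1.trans_lt ?_
  calc _ ≤ 4 * lam * ((1 / (2 * lam)) * ((1 + t) * F + (1 + 1 / t) * η)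
        + (ε * (b - a) + (ε ^ 2 / 2) * C) - (1 / (2 * lam)) * F) := by
        apply mul_le_mul_of_nonneg_left _ (by positivity)
        linarith
    _ = 2 * (t * F) + 2 * ((1 + 1 / t) * η) + 4 * lam * (ε * (b - a) + (ε ^ 2 / 2) * C) := by
        generalize (1 + 1 / t) * η = z
        field_simp; ring
    _ < ρ := by linarith
end
end

section
/- Let u₀ : ℝ → ℝⁿ be Borel measurable and square-integrable on I, and let (u_k) be a sequence such that for each k ≥ 0, u_{k+1} is a minimizer of the Rudin–Osher–Fatemi energy E_{u_k} with datum u_k (these are the iterates of the resolvent used in the exponential formula for the total variation flow). Then for every open interval J ⊆ I and every k ≥ 0, eVariationOn u_k J ≤ eVariationOn u₀ J. -/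
open MeasureTheory Set Filter
open scoped ENNReal

noncomputable section

set_option linter.unusedSectionVars false

structure RofSetup {E : Type*} [NormedAddCommGroup E] [InnerProductSpace ℝ E]
    (u g f Z : ℝ → E) (v w : ℝ → ℝ) (lam c d : ℝ) : Prop where
  lam_pos : 0 < lam
  hf : Integrable f
  hfe : ∀ x ∈ Ioo c d, u x - g x = lam • f x
  hZ : ∀ p q, Z q - Z p = ∫ x in p..q, f x
  hZ1 : ∀ x ∈ Ioo c d, ‖Z x‖ ≤ 1
  hv : ∀ s ∈ Ioo c d, ∀ t ∈ Ioo c d, s ≤ t → ‖u t - u s‖ ≤ v t - v s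
  hw : ∀ s ∈ Ioo c d, ∀ t ∈ Ioo c d, s ≤ t → ‖g t - g s‖ ≤ w t - w s
  K : ∀ s ∈ Ioo c d, ∀ t ∈ Ioo c d, ∀ ξ ∈ Icc s t,
    (v t - v s) * (1 - 2 * ∫ x in s..t, ‖f x‖) ≤ inner ℝ (Z ξ) (u t - u s)

namespace RofSetup

variable {E : Type*} [NormedAddCommGroup E] [InnerProductSpace ℝ E] [CompleteSpace E]
    {u g f Z : ℝ → E} {v w : ℝ → ℝ} {lam c d : ℝ}

theorem contZ (S : RofSetup u g f Z v w lam c d) : Continuous Z := by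
  have : Z = fun x => Z 0 + ∫ y in (0:ℝ)..x, f y := by
    funext x; rw [← S.hZ 0 x]; abel
  rw [this]
  exact continuous_const.add
    (intervalIntegral.continuous_primitive (fun _ _ => S.hf.intervalIntegrable) 0)

theorem small (S : RofSetup u g f Z v w lam c d) {η : ℝ} (hη : 0 < η) :
    ∃ δ > 0, ∀ s ∈ Ioo c d, ∀ t ∈ Ioo c d, s ≤ t → t - s ≤ δ → ∫ x in s..t, ‖f x‖ ≤ η := by
  have hi : ∀ p q, IntervalIntegrable (fun x => ‖f x‖) volume p q :=
    fun _ _ => S.hf.norm.intervalIntegrable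
  have hc : Continuous (fun x => ∫ y in (0:ℝ)..x, ‖f y‖) :=
    intervalIntegral.continuous_primitive hi 0
  have hu := (isCompact_Icc (a := c) (b := d)).uniformContinuousOn_of_continuous hc.continuousOn
  rw [Metric.uniformContinuousOn_iff] at hu
  obtain ⟨δ, hδ, h⟩ := hu η hη
  refine ⟨δ / 2, by positivity, fun s hs t ht hst hd => ?_⟩
  have := h t (Ioo_subset_Icc_self ht) s (Ioo_subset_Icc_self hs)
    (by rw [Real.dist_eq, abs_of_nonneg (by linarith)]; linarith)
  rw [Real.dist_eq, intervalIntegral.integral_interval_sub_left (hi _ _) (hi _ _)] at this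
  exact (le_abs_self _).trans this.le

theorem mono_v (S : RofSetup u g f Z v w lam c d) : MonotoneOn v (Ioo c d) :=
  fun s hs t ht h => by have := (norm_nonneg _).trans (S.hv s hs t ht h); linarith

theorem mono_w (S : RofSetup u g f Z v w lam c d) : MonotoneOn w (Ioo c d) :=
  fun s hs t ht h => by have := (norm_nonneg _).trans (S.hw s hs t ht h); linarith

/-- `v` is constant where `‖Z‖ < 1`. -/
theorem free (S : RofSetup u g f Z v w lam c d) {s t : ℝ} (hs : s ∈ Ioo c d) (ht : t ∈ Ioo c d)
    (hst : s ≤ t) (hA : ∀ x ∈ Icc s t, ‖Z x‖ ≠ 1) : v t = v s := by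
  have hsub : Icc s t ⊆ Ioo c d := fun x hx => ⟨hs.1.trans_le hx.1, hx.2.trans_lt ht.2⟩
  obtain ⟨x0, hx0, hmax⟩ := (isCompact_Icc (a := s) (b := t)).exists_isMaxOn
    (nonempty_Icc.2 hst) S.contZ.norm.continuousOn
  set m := ‖Z x0‖ with hm
  have hm1 : m < 1 := lt_of_le_of_ne (S.hZ1 _ (hsub hx0)) (hA _ hx0)
  have hm0 : 0 ≤ m := norm_nonneg _
  obtain ⟨δ, hδ, hsm⟩ := S.small (η := (1 - m) / 4) (by linarith)
  have step : ∀ p ∈ Icc s t, ∀ q ∈ Icc s t, p ≤ q → q - p ≤ δ → v q = v p := by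
    intro p hp q hq hpq hd
    have h1 := S.K p (hsub hp) q (hsub hq) p ⟨le_rfl, hpq⟩
    have h2 := hsm p (hsub hp) q (hsub hq) hpq hd
    have h3 := S.hv p (hsub hp) q (hsub hq) hpq
    have h4 : inner ℝ (Z p) (u q - u p) ≤ m * (v q - v p) :=
      (real_inner_le_norm _ _).trans (mul_le_mul (hmax hp) h3 (norm_nonneg _) hm0)
    have h5 : 0 ≤ v q - v p := (norm_nonneg _).trans h3
    have h6 : (v q - v p) * (1 - 2 * ((1 - m) / 4)) ≤
        (v q - v p) * (1 - 2 * ∫ x in p..q, ‖f x‖) :=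
      mul_le_mul_of_nonneg_left (by linarith) h5
    have h7 : (v q - v p) * ((1 - m) / 2) ≤ 0 := by nlinarith
    have h8 : v q - v p ≤ 0 := by
      by_contra hc
      push Not at hc
      have := mul_pos hc (show 0 < (1 - m) / 2 by linarith)
      linarith
    linarith
  have ind : ∀ n : ℕ, ∀ q ∈ Icc s t, q - s ≤ n * δ → v q = v s := by
    intro n
    induction n with
    | zero =>
      intro q hq h
      have : q = s := le_antisymm (by simpa using h) hq.1
      rw [this]
    | succ n ih =>
      intro q hq h
      push_cast at h
      have hp : max s (q - δ) ∈ Icc s t := ⟨le_max_left _ _, max_le hst (by linarith [hq.2])⟩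
      rw [step (max s (q - δ)) hp q hq (max_le hq.1 (by linarith))
        (by linarith [le_max_right s (q - δ)])]
      refine ih _ hp ?_
      rcases max_cases s (q - δ) with ⟨h1, _⟩ | ⟨h1, _⟩ <;> rw [h1]
      · simp; positivity
      · linarith
  obtain ⟨n, hn⟩ := exists_nat_ge ((t - s) / δ)
  exact ind n t ⟨hst, le_rfl⟩ (by rwa [div_le_iff₀ hδ] at hn)

/-- good cells: short or free of contact points -/
def Good (Z : ℝ → E) (δ p q : ℝ) : Prop :=
  p < q ∧ (q - p ≤ δ ∨ ∀ x ∈ Ioo p q, ‖Z x‖ ≠ 1)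

theorem left_pt (S : RofSetup u g f Z v w lam c d) {δ p q s : ℝ} (hδ : 0 < δ)
    (h : Good Z δ p q) (hp : p ∈ Ioo c d) (hq : q ∈ Ioo c d) (hs : s ∈ Ioo p q) :
    ∃ s', s ≤ s' ∧ s' < q ∧ q - s' ≤ δ ∧ v s' = v s := by
  rcases h.2 with h | h
  · exact ⟨s, le_rfl, hs.2, by linarith [hs.1], rfl⟩
  · refine ⟨max s (q - δ), le_max_left _ _, max_lt hs.2 (by linarith),
      by linarith [le_max_right s (q - δ)], ?_⟩
    have h1 : max s (q - δ) < q := max_lt hs.2 (by linarith)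
    refine S.free ⟨hp.1.trans hs.1, hs.2.trans hq.2⟩
      ⟨(hp.1.trans hs.1).trans_le (le_max_left _ _), h1.trans hq.2⟩ (le_max_left _ _) ?_
    exact fun x hx => h x ⟨hs.1.trans_le hx.1, hx.2.trans_lt h1⟩

theorem right_pt (S : RofSetup u g f Z v w lam c d) {δ p q s : ℝ} (hδ : 0 < δ)
    (h : Good Z δ p q) (hp : p ∈ Ioo c d) (hq : q ∈ Ioo c d) (hs : s ∈ Ioo p q) :
    ∃ s', s' ≤ s ∧ p < s' ∧ s' - p ≤ δ ∧ v s = v s' := by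
  rcases h.2 with h | h
  · exact ⟨s, le_rfl, hs.1, by linarith [hs.2], rfl⟩
  · have h1 : p < min s (p + δ) := lt_min hs.1 (by linarith)
    refine ⟨min s (p + δ), min_le_left _ _, h1, by linarith [min_le_right s (p + δ)], ?_⟩
    refine S.free ⟨hp.1.trans h1, (min_le_left _ _).trans_lt (hs.2.trans hq.2)⟩
      ⟨(hp.1.trans hs.1), hs.2.trans hq.2⟩ (min_le_left _ _) ?_
    exact fun x hx => h x ⟨h1.trans_le hx.1, hx.2.trans_lt hs.2⟩

theorem eq_of_v (S : RofSetup u g f Z v w lam c d) {s t : ℝ} (hs : s ∈ Ioo c d)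
    (ht : t ∈ Ioo c d) (hst : s ≤ t) (h : v t = v s) : u t = u s := by
  have := S.hv s hs t ht hst
  rw [h, sub_self] at this
  exact sub_eq_zero.1 (norm_le_zero_iff.1 this)

/-- averaged comparison across a contact point -/
theorem cross (S : RofSetup u g f Z v w lam c d) {δ ε p q r : ℝ} (hδ : 0 < δ)
    (hsm : ∀ s ∈ Ioo c d, ∀ t ∈ Ioo c d, s ≤ t → t - s ≤ 2 * δ → ∫ x in s..t, ‖f x‖ ≤ ε / 2)
    (h1 : Good Z δ p q) (h2 : Good Z δ q r) (hp : p ∈ Ioo c d) (hr : r ∈ Ioo c d)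
    (hq : ‖Z q‖ = 1) :
    (∫ x in p..q, (w x - (1 - ε) * v x)) / (q - p) ≤
      (∫ x in q..r, (w x - (1 - ε) * v x)) / (r - q) := by
  have hpq := h1.1
  have hqr := h2.1
  have hqI : q ∈ Ioo c d := ⟨hp.1.trans hpq, hqr.trans hr.2⟩
  have mem : ∀ x, p ≤ x → x ≤ r → x ∈ Ioo c d := fun x h h' =>
    ⟨hp.1.trans_le h, h'.trans_lt hr.2⟩
  have key : ∀ s ∈ Ioo p q, ∀ t ∈ Ioo q r,
      w s - (1 - ε) * v s + inner ℝ (Z q) (lam • f s) ≤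
        w t - (1 - ε) * v t + inner ℝ (Z q) (lam • f t) := by
    intro s hs t ht
    have hsI := mem s hs.1.le (hs.2.trans hqr).le
    have htI := mem t (hpq.trans ht.1).le ht.2.le
    obtain ⟨s', a1, a2, a3, a4⟩ := S.left_pt hδ h1 hp hqI hs
    obtain ⟨t', b1, b2, b3, b4⟩ := S.right_pt hδ h2 hqI hr ht
    have hs'I := mem s' (hs.1.le.trans a1) (a2.trans hqr).le
    have ht'I := mem t' (hpq.trans b2).le (b1.trans ht.2.le)
    have e1 := S.eq_of_v hsI hs'I a1 a4
    have e2 := S.eq_of_v ht'I htI b1 b4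
    have hK := S.K s' hs'I t' ht'I q ⟨a2.le, b2.le⟩
    have hst' : s' ≤ t' := (a2.trans b2).le
    have h5 : 0 ≤ v t' - v s' := by linarith [S.mono_v hs'I ht'I hst']
    have hsm' := hsm s' hs'I t' ht'I hst' (by linarith)
    have h6 : (v t' - v s') * (1 - ε) ≤ (v t' - v s') * (1 - 2 * ∫ x in s'..t', ‖f x‖) :=
      mul_le_mul_of_nonneg_left (by linarith) h5
    rw [← S.hfe s hsI, ← S.hfe t htI]
    have hg : inner ℝ (Z q) (g t - g s) ≤ w t - w s := by
      refine (real_inner_le_norm _ _).trans ?_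
      rw [hq, one_mul]
      exact S.hw s hsI t htI (hs.2.trans ht.1).le
    rw [e1, ← e2] at hK
    simp only [inner_sub_right] at hK hg ⊢
    rw [a4, ← b4] at hK h6
    nlinarith
  have hl : ∀ p q, IntervalIntegrable (fun x => inner ℝ (Z q) (lam • f x)) volume p q :=
    fun p q => ((S.hf.smul lam).const_inner (𝕜 := ℝ) (Z q)).intervalIntegrable
  have hli : ∀ s t, IntervalIntegrable (fun x => inner ℝ (Z q) (lam • f x)) volume s t :=
    fun s t => ((S.hf.smul lam).const_inner (𝕜 := ℝ) (Z q)).intervalIntegrable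
  have hint : ∀ s t, ∫ x in s..t, inner ℝ (Z q) (lam • f x) = lam * inner ℝ (Z q) (Z t - Z s) := by
    intro s t
    have := intervalIntegral.intervalIntegral_eq_integral_uIoc
      (fun x => (inner ℝ (Z q) (lam • f x) : ℝ)) s t volume
    rw [S.hZ, intervalIntegral.intervalIntegral_eq_integral_uIoc f, this, inner_smul_right,
      ← integral_inner S.hf.integrableOn]
    simp only [inner_smul_right, smul_eq_mul]
    rw [integral_const_mul]
    ring
  have hmi : ∀ s t, s ≤ t → p ≤ s → t ≤ r →
      IntervalIntegrable (fun x => w x - (1 - ε) * v x) volume s t := by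
    intro s t hst hs ht
    have hsub : uIcc s t ⊆ Ioo c d := by
      rw [uIcc_of_le hst]; exact fun x hx => mem x (hs.trans hx.1) (hx.2.trans ht)
    exact (S.mono_w.mono hsub).intervalIntegrable.sub
      ((S.mono_v.mono hsub).intervalIntegrable.const_mul _)
  set F : ℝ → ℝ := fun x => w x - (1 - ε) * v x + inner ℝ (Z q) (lam • f x) with hF
  have hbdd : BddAbove (F '' Ioo p q) := by
    refine ⟨F ((q + r) / 2), ?_⟩
    rintro _ ⟨s, hs, rfl⟩
    exact key s hs _ ⟨by linarith, by linarith⟩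
  set C := sSup (F '' Ioo p q) with hC
  have hC1 : ∀ s ∈ Ioo p q, F s ≤ C := fun s hs => le_csSup hbdd ⟨s, hs, rfl⟩
  have hC2 : ∀ t ∈ Ioo q r, C ≤ F t := fun t ht => csSup_le ((nonempty_Ioo.2 hpq).image _) (by
    rintro _ ⟨s, hs, rfl⟩; exact key s hs t ht)
  have i1 := intervalIntegral.integral_mono_on_of_le_Ioo hpq.le
    ((hmi p q hpq.le le_rfl hqr.le).add (hli p q)) (intervalIntegrable_const (c := C)) hC1
  have i2 := intervalIntegral.integral_mono_on_of_le_Ioo hqr.le (intervalIntegrable_const (c := C))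
    ((hmi q r hqr.le hpq.le le_rfl).add (hli q r)) hC2
  rw [intervalIntegral.integral_add (hmi p q hpq.le le_rfl hqr.le) (hli p q), hint,
    intervalIntegral.integral_const, smul_eq_mul] at i1
  rw [intervalIntegral.integral_add (hmi q r hqr.le hpq.le le_rfl) (hli q r), hint,
    intervalIntegral.integral_const, smul_eq_mul] at i2
  have in1 : ∀ x ∈ Ioo c d, inner ℝ (Z q) (Z x) ≤ (1:ℝ) := fun x hx =>
    (real_inner_le_norm _ _).trans (by rw [hq, one_mul]; exact S.hZ1 x hx)
  have in2 : inner ℝ (Z q) (Z q) = (1:ℝ) := by rw [real_inner_self_eq_norm_sq, hq]; norm_num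
  have j1 : 0 ≤ lam * inner ℝ (Z q) (Z q - Z p) :=
    mul_nonneg S.lam_pos.le (by rw [inner_sub_right, in2]; linarith [in1 p hp])
  have j2 : lam * inner ℝ (Z q) (Z r - Z q) ≤ 0 :=
    mul_nonpos_of_nonneg_of_nonpos S.lam_pos.le (by rw [inner_sub_right, in2]; linarith [in1 r hr])
  calc _ ≤ C := by rw [div_le_iff₀ (by linarith)]; linarith
    _ ≤ _ := by rw [le_div_iff₀ (by linarith)]; linarith

/-- chaining of cells -/
theorem chain (hZc : Continuous Z) {δ : ℝ} (hδ : 0 < δ) (M : ℝ → ℝ → ℝ) {c' d' : ℝ}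
    (hM : ∀ p q r, c' ≤ p → r ≤ d' → Good Z δ p q → Good Z δ q r → ‖Z q‖ = 1 → M p q ≤ M q r)
    (n : ℕ) : ∀ p, c' ≤ p → p < d' → d' - p ≤ n * δ →
      ∃ q0 p0, q0 ≤ d' ∧ p ≤ p0 ∧ Good Z δ p q0 ∧ Good Z δ p0 d' ∧ M p q0 ≤ M p0 d' := by
  have single : ∀ p, Good Z δ p d' →
      ∃ q0 p0, q0 ≤ d' ∧ p ≤ p0 ∧ Good Z δ p q0 ∧ Good Z δ p0 d' ∧ M p q0 ≤ M p0 d' :=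
    fun p h => ⟨d', p, le_rfl, le_rfl, h, h, le_rfl⟩
  have concat : ∀ p q, c' ≤ p → Good Z δ p q → ‖Z q‖ = 1 →
      (∃ q0 p0, q0 ≤ d' ∧ q ≤ p0 ∧ Good Z δ q q0 ∧ Good Z δ p0 d' ∧ M q q0 ≤ M p0 d') →
      ∃ q0 p0, q0 ≤ d' ∧ p ≤ p0 ∧ Good Z δ p q0 ∧ Good Z δ p0 d' ∧ M p q0 ≤ M p0 d' := by
    rintro p q hp h hq ⟨q0, p0, a1, a2, a3, a4, a5⟩
    exact ⟨q, p0, a3.1.le.trans a1, h.1.le.trans a2, h, a4, (hM p q q0 hp a1 h a3 hq).trans a5⟩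
  have hAc : IsClosed {x | ‖Z x‖ = 1} := isClosed_eq hZc.norm continuous_const
  -- moving from `p` to `e` when the contact points in between are within `δ` of `p`
  have move : ∀ p e, p < e → (∀ x ∈ Ioo p e, ‖Z x‖ = 1 → x ≤ p + δ) →
      Good Z δ p e ∨ ∃ q, Good Z δ p q ∧ ‖Z q‖ = 1 ∧ Good Z δ q e := by
    intro p e hpe hx
    by_cases hne : ∃ x ∈ Ioo p e, ‖Z x‖ = 1
    · obtain ⟨x, hx1, hx2⟩ := hne
      have hcomp : IsCompact (Icc x e ∩ Icc x (p + δ) ∩ {x | ‖Z x‖ = 1}) :=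
        (isCompact_Icc.inter_right isClosed_Icc).inter_right hAc
      obtain ⟨q, hq, hqm⟩ := hcomp.exists_isGreatest
        ⟨x, ⟨⟨le_rfl, hx1.2.le⟩, ⟨le_rfl, hx x hx1 hx2⟩⟩, hx2⟩
      have hpq : p < q := hx1.1.trans_le hq.1.1.1
      have hg : Good Z δ p q := ⟨hpq, Or.inl (by linarith [hq.1.2.2])⟩
      rcases hq.1.1.2.eq_or_lt with h | h
      · left; rwa [← h]
      · right
        refine ⟨q, hg, hq.2, h, Or.inr fun y hy hy1 => ?_⟩
        have := hqm ⟨⟨⟨hq.1.1.1.trans hy.1.le, hy.2.le⟩, ⟨hq.1.1.1.trans hy.1.le,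
          hx y ⟨hpq.trans hy.1, hy.2⟩ hy1⟩⟩, hy1⟩
        linarith [hy.1]
    · left
      exact ⟨hpe, Or.inr fun x hx h => hne ⟨x, hx, h⟩⟩
  induction n with
  | zero => intro p _ h1 h2; simp at h2; linarith
  | succ n ih =>
    intro p hp hpd hn
    push_cast at hn
    by_cases hB : ∃ x, p + δ ≤ x ∧ x < d' ∧ ‖Z x‖ = 1
    · obtain ⟨x, x1, x2, x3⟩ := hB
      have hcomp : IsCompact (Icc (p + δ) x ∩ {x | ‖Z x‖ = 1}) := isCompact_Icc.inter_right hAc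
      obtain ⟨q, hq, hqm⟩ := hcomp.exists_isLeast ⟨x, ⟨x1, le_rfl⟩, x3⟩
      have hqd : q < d' := hq.1.2.trans_lt x2
      have hpq : p < q := by linarith [hq.1.1]
      have IH := ih q (hp.trans hpq.le) hqd (by linarith [hq.1.1])
      rcases move p q hpq (fun y hy hy1 => by
        by_contra hc
        push Not at hc
        have := hqm ⟨⟨hc.le, hy.2.le.trans hq.1.2⟩, hy1⟩
        linarith [hy.2]) with h | ⟨y, h1, h2, h3⟩
      · exact concat p q hp h hq.2 IH
      · exact concat p y hp h1 h2 (concat y q (hp.trans h1.1.le) h3 hq.2 IH)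
    · push Not at hB
      rcases move p d' hpd (fun y hy hy1 => by
        by_contra hc
        push Not at hc
        exact hB y hc.le hy.2 hy1) with h | ⟨y, h1, h2, h3⟩
      · exact single p h
      · exact concat p y hp h1 h2 (single y h3)

theorem main_eps (S : RofSetup u g f Z v w lam c d) {ε c' x y d' : ℝ} (hε : 0 < ε) (hε1 : ε < 1)
    (h1 : c < c') (h2 : c' < x) (h3 : x ≤ y) (h4 : y < d') (h5 : d' < d) :
    (1 - ε) * (v y - v x) ≤ w d' - w c' := by
  have mem : ∀ z, c' ≤ z → z ≤ d' → z ∈ Ioo c d := fun z h h' =>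
    ⟨h1.trans_le h, h'.trans_lt h5⟩
  have hcd : c' < d' := by linarith
  have hxI := mem x h2.le (by linarith)
  have hyI := mem y (by linarith) h4.le
  obtain ⟨δ0, hδ0, hsm0⟩ := S.small (η := ε / 2) (by linarith)
  set δ := min (δ0 / 2) (min (x - c') (d' - y)) with hδd
  have hδ : 0 < δ := lt_min (by linarith) (lt_min (by linarith) (by linarith))
  have hδa : δ ≤ δ0 / 2 := min_le_left _ _
  have hδb : δ ≤ x - c' := (min_le_right _ _).trans (min_le_left _ _)
  have hδc : δ ≤ d' - y := (min_le_right _ _).trans (min_le_right _ _)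
  obtain ⟨n, hn⟩ := exists_nat_ge ((d' - c') / δ)
  rw [div_le_iff₀ hδ] at hn
  obtain ⟨q0, p0, a1, a2, a3, a4, a5⟩ := chain (Z := Z) S.contZ hδ
    (fun p q => (∫ x in p..q, (w x - (1 - ε) * v x)) / (q - p)) (c' := c') (d' := d')
    (fun p q r hp hr g1 g2 hq => S.cross hδ
      (fun s hs t ht hst hd => hsm0 s hs t ht hst (by linarith)) g1 g2
      (mem p hp (by linarith [g1.1, g2.1])) (mem r (by linarith [g1.1, g2.1]) hr) hq)
    n c' le_rfl hcd hn
  have hmi : ∀ s t, s ≤ t → c' ≤ s → t ≤ d' →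
      IntervalIntegrable (fun x => w x - (1 - ε) * v x) volume s t := by
    intro s t hst hs ht
    have hsub : uIcc s t ⊆ Ioo c d := by
      rw [uIcc_of_le hst]; exact fun x hx => mem x (hs.trans hx.1) (hx.2.trans ht)
    exact (S.mono_w.mono hsub).intervalIntegrable.sub
      ((S.mono_v.mono hsub).intervalIntegrable.const_mul _)
  have hc'I := mem c' le_rfl hcd.le
  have hd'I := mem d' hcd.le le_rfl
  have b1 : ∀ z ∈ Ioo c' q0, v z ≤ v x := by
    intro z hz
    have hzI := mem z hz.1.le (hz.2.le.trans a1)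
    rcases le_total z x with h | h
    · exact S.mono_v hzI hxI h
    · rcases a3.2 with hs | hs
      · linarith [hz.2]
      · exact (S.free hxI hzI h fun t ht => hs t ⟨h2.trans_le ht.1, ht.2.trans_lt hz.2⟩).le
  have b2 : ∀ z ∈ Ioo p0 d', v y ≤ v z := by
    intro z hz
    have hzI := mem z (a2.trans hz.1.le) hz.2.le
    rcases le_total y z with h | h
    · exact S.mono_v hyI hzI h
    · rcases a4.2 with hs | hs
      · linarith [hz.1]
      · exact (S.free hzI hyI h fun t ht => hs t ⟨hz.1.trans_le ht.1, ht.2.trans_lt h4⟩).le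
  have i1 := intervalIntegral.integral_mono_on_of_le_Ioo a3.1.le
    (intervalIntegrable_const (c := w c' - (1 - ε) * v x)) (hmi c' q0 a3.1.le le_rfl a1)
    (fun z hz => by
      have := S.mono_w hc'I (mem z hz.1.le (hz.2.le.trans a1)) hz.1.le
      have := mul_le_mul_of_nonneg_left (b1 z hz) (show 0 ≤ 1 - ε by linarith)
      linarith)
  have i2 := intervalIntegral.integral_mono_on_of_le_Ioo a4.1.le
    (hmi p0 d' a4.1.le a2 le_rfl) (intervalIntegrable_const (c := w d' - (1 - ε) * v y))
    (fun z hz => by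
      have := S.mono_w (mem z (a2.trans hz.1.le) hz.2.le) hd'I hz.2.le
      have := mul_le_mul_of_nonneg_left (b2 z hz) (show 0 ≤ 1 - ε by linarith)
      linarith)
  rw [intervalIntegral.integral_const, smul_eq_mul] at i1 i2
  have k1 : w c' - (1 - ε) * v x ≤ (∫ x in c'..q0, (w x - (1 - ε) * v x)) / (q0 - c') := by
    rw [le_div_iff₀ (by linarith [a3.1])]; linarith
  have k2 : (∫ x in p0..d', (w x - (1 - ε) * v x)) / (d' - p0) ≤ w d' - (1 - ε) * v y := by
    rw [div_le_iff₀ (by linarith [a4.1])]; linarith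
  have := k1.trans (a5.trans k2)
  linarith

theorem main (S : RofSetup u g f Z v w lam c d) {c' x y d' : ℝ}
    (h1 : c < c') (h2 : c' < x) (h3 : x ≤ y) (h4 : y < d') (h5 : d' < d) :
    v y - v x ≤ w d' - w c' := by
  have hc : Tendsto (fun ε : ℝ => (1 - ε) * (v y - v x)) (nhdsWithin 0 (Ioi 0))
      (nhds ((1 - 0) * (v y - v x))) := by
    apply Tendsto.mono_left _ nhdsWithin_le_nhds
    apply Continuous.tendsto
    fun_prop
  rw [sub_zero, one_mul] at hc
  refine le_of_tendsto hc ?_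
  filter_upwards [Ioo_mem_nhdsGT (show (0:ℝ) < 1 by norm_num)] with ε hε
  exact S.main_eps hε.1 hε.2 h1 h2 h3 h4 h5

end RofSetup

theorem rof_eV_le_mul {E F : Type*} [PseudoEMetricSpace E] [PseudoEMetricSpace F]
    {w : ℝ → E} {u : ℝ → F} {S : Set ℝ} (C : ℝ≥0∞)
    (h : ∀ x ∈ S, ∀ y ∈ S, edist (w x) (w y) ≤ C * edist (u x) (u y)) :
    eVariationOn w S ≤ C * eVariationOn u S := by
  refine iSup_le fun p => ?_
  refine (Finset.sum_le_sum fun i _ => h _ (p.2.2.2 (i + 1)) _ (p.2.2.2 i)).trans ?_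
  rw [← Finset.mul_sum]
  gcongr
  exact eVariationOn.sum_le p.2.2.1 p.2.2.2

theorem rof_eV_add {E : Type*} [NormedAddCommGroup E] (w u : ℝ → E) (S : Set ℝ) :
    eVariationOn (fun x => w x + u x) S ≤ eVariationOn w S + eVariationOn u S := by
  refine iSup_le fun p => ?_
  refine (Finset.sum_le_sum fun i _ => edist_add_add_le _ _ _ _).trans ?_
  rw [Finset.sum_add_distrib]
  gcongr
  · exact eVariationOn.sum_le p.2.2.1 p.2.2.2
  · exact eVariationOn.sum_le p.2.2.1 p.2.2.2

theorem rof_eV_split {E : Type*} [PseudoEMetricSpace E] (w : ℝ → E) {a b s t : ℝ}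
    (h1 : a < s) (h2 : s ≤ t) (h3 : t < b) :
    eVariationOn w (Ioo a b) =
      eVariationOn w (Ioc a s) + eVariationOn w (Icc s t) + eVariationOn w (Ico t b) := by
  have g1 : IsGreatest (Ioc a s) s := ⟨⟨h1, le_rfl⟩, fun x hx => hx.2⟩
  have g2 : IsLeast (Icc s t) s := ⟨⟨le_rfl, h2⟩, fun x hx => hx.1⟩
  have g3 : IsGreatest (Ioc a s ∪ Icc s t) t :=
    ⟨Or.inr ⟨h2, le_rfl⟩, fun x hx => hx.elim (fun h => h.2.trans h2) (fun h => h.2)⟩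
  have g4 : IsLeast (Ico t b) t := ⟨⟨le_rfl, h3⟩, fun x hx => hx.1⟩
  rw [← eVariationOn.union w g1 g2, ← eVariationOn.union w g3 g4]
  congr 1
  ext x
  simp only [mem_Ioo, mem_union, mem_Ioc, mem_Icc, mem_Ico]
  constructor
  · rintro ⟨p, q⟩
    rcases le_or_gt x s with h | h
    · exact Or.inl (Or.inl ⟨p, h⟩)
    rcases le_or_gt x t with h' | h'
    · exact Or.inl (Or.inr ⟨h.le, h'⟩)
    · exact Or.inr ⟨h'.le, q⟩
  · rintro ((⟨p, q⟩ | ⟨p, q⟩) | ⟨p, q⟩) <;> constructor <;> linarith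

section Min

variable {n : ℕ} {lam a b : ℝ} {g u : ℝ → EuclideanSpace ℝ (Fin n)}

theorem rof_memLp (hm : Measurable u) (hs : SqIntOn u (Ioo a b)) :
    MemLp u 2 (volume.restrict (Ioo a b)) :=
  (memLp_two_iff_integrable_sq_norm hm.aestronglyMeasurable).2 hs

theorem rof_finite (hu : IsMinimizer lam a b g u) : eVariationOn u (Ioo a b) ≠ ⊤ := by
  have h := hu.2.2 (fun _ => 0) measurable_const (by simp [SqIntOn])
  have h0 : eVariationOn (fun _ : ℝ => (0 : EuclideanSpace ℝ (Fin n))) (Ioo a b) = 0 :=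
    eVariationOn.constant_on (by rintro _ ⟨x, _, rfl⟩ _ ⟨y, _, rfl⟩; rfl)
  unfold rofEnergy at h
  rw [h0, zero_add] at h
  exact ne_top_of_le_ne_top ENNReal.ofReal_ne_top (le_self_add.trans h)

/-- rescaled residual -/
def rofF (lam a b : ℝ) (g u : ℝ → EuclideanSpace ℝ (Fin n)) : ℝ → EuclideanSpace ℝ (Fin n) :=
  (Ioo a b).indicator fun x => (1 / lam) • (u x - g x)

theorem rofF_integrable (hgm : Measurable g) (hgs : SqIntOn g (Ioo a b))
    (hu : IsMinimizer lam a b g u) : Integrable (rofF lam a b g u) := by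
  unfold rofF
  rw [integrable_indicator_iff measurableSet_Ioo]
  have := ((rof_memLp hu.1 hu.2.1).sub (rof_memLp hgm hgs)).integrable (by norm_num)
  exact this.smul (1 / lam)

theorem rof_first_order (hlam : 0 < lam) (hgm : Measurable g) (hgs : SqIntOn g (Ioo a b))
    (hu : IsMinimizer lam a b g u) (φ : ℝ → EuclideanSpace ℝ (Fin n)) (hφ : Measurable φ)
    (C : ℝ) (hC : ∀ x, ‖φ x‖ ≤ C) (D1 D2 : ℝ) (hD1 : 0 ≤ D1) (hD2 : 0 ≤ D2)
    (H : ∀ τ : ℝ, 0 < τ → τ ≤ 1 →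
      eVariationOn (fun x => u x + τ • φ x) (Ioo a b) + ENNReal.ofReal (τ * D1) ≤
        eVariationOn u (Ioo a b) + ENNReal.ofReal (τ * D2)) :
    D1 ≤ D2 + ∫ x in Ioo a b, inner ℝ (rofF lam a b g u x) (φ x) := by
  have hfin := rof_finite hu
  have hd : MemLp (fun x => u x - g x) 2 (volume.restrict (Ioo a b)) :=
    (rof_memLp hu.1 hu.2.1).sub (rof_memLp hgm hgs)
  have hp : MemLp φ 2 (volume.restrict (Ioo a b)) :=
    MemLp.of_bound hφ.aestronglyMeasurable C (Eventually.of_forall hC)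
  have hi1 : Integrable (fun x => ‖u x - g x‖ ^ 2) (volume.restrict (Ioo a b)) :=
    (memLp_two_iff_integrable_sq_norm hd.1).1 hd
  have hi2 : Integrable (fun x => ‖φ x‖ ^ 2) (volume.restrict (Ioo a b)) :=
    (memLp_two_iff_integrable_sq_norm hp.1).1 hp
  have hi3 : Integrable (fun x => (inner ℝ (u x - g x) (φ x) : ℝ)) (volume.restrict (Ioo a b)) := by
    refine (hi1.add hi2).mono' (hd.1.inner hp.1) (Eventually.of_forall fun x => ?_)
    have h1 := norm_inner_le_norm (𝕜 := ℝ) (u x - g x) (φ x)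
    simp only [Pi.add_apply]
    nlinarith [sq_nonneg (‖u x - g x‖ - ‖φ x‖), sq_nonneg (‖u x - g x‖), sq_nonneg (‖φ x‖)]
  have hP : ∫ x in Ioo a b, inner ℝ (rofF lam a b g u x) (φ x) =
      (1 / lam) * ∫ x in Ioo a b, inner ℝ (u x - g x) (φ x) := by
    rw [← integral_const_mul]
    refine setIntegral_congr_fun measurableSet_Ioo fun x hx => ?_
    simp only [rofF, indicator_of_mem hx, inner_smul_left]
    simp
  rw [hP]
  set P := ∫ x in Ioo a b, inner ℝ (u x - g x) (φ x) with hPd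
  set Q := ∫ x in Ioo a b, ‖φ x‖ ^ 2 with hQd
  set A := ∫ x in Ioo a b, ‖u x - g x‖ ^ 2 with hAd
  have hA0 : 0 ≤ A := integral_nonneg fun x => by positivity
  have main : ∀ τ : ℝ, 0 < τ → τ ≤ 1 → D1 ≤ D2 + 1 / lam * P + τ * (Q / (2 * lam)) := by
    intro τ h0 h1
    have hB : ∫ x in Ioo a b, ‖u x + τ • φ x - g x‖ ^ 2 = A + 2 * τ * P + τ ^ 2 * Q := by
      have hs1 : Integrable (fun x => ‖u x - g x‖ ^ 2 + 2 * τ * inner ℝ (u x - g x) (φ x))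
          (volume.restrict (Ioo a b)) := hi1.add (hi3.const_mul _)
      rw [hPd, hQd, hAd, ← integral_const_mul, ← integral_const_mul,
        ← integral_add hi1 (hi3.const_mul _), ← integral_add hs1 (hi2.const_mul _)]
      congr 1
      funext x
      rw [show u x + τ • φ x - g x = (u x - g x) + τ • φ x by abel, norm_add_sq_real,
        inner_smul_right, norm_smul, mul_pow, Real.norm_eq_abs, sq_abs]
      simp
      ring
    have hwm : Measurable (fun x => u x + τ • φ x) := hu.1.add (hφ.const_smul τ)
    have hw2 : MemLp (fun x => u x + τ • φ x) 2 (volume.restrict (Ioo a b)) :=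
      (rof_memLp hu.1 hu.2.1).add (hp.const_smul τ)
    have hmin := hu.2.2 _ hwm ((memLp_two_iff_integrable_sq_norm hw2.1).1 hw2)
    have HH := H τ h0 h1
    unfold rofEnergy at hmin
    rw [hB] at hmin
    have hB0 : 0 ≤ A + 2 * τ * P + τ ^ 2 * Q := by
      rw [← hB]; exact integral_nonneg fun x => by positivity
    have hwfin : eVariationOn (fun x => u x + τ • φ x) (Ioo a b) ≠ ⊤ :=
      ne_top_of_le_ne_top (ENNReal.add_ne_top.2 ⟨hfin, ENNReal.ofReal_ne_top⟩)
        (le_self_add.trans HH)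
    rw [← ENNReal.ofReal_toReal hfin, ← ENNReal.ofReal_toReal hwfin,
      ← ENNReal.ofReal_add ENNReal.toReal_nonneg (by positivity),
      ← ENNReal.ofReal_add ENNReal.toReal_nonneg (by positivity),
      ENNReal.ofReal_le_ofReal_iff (by positivity)] at hmin HH
    have e1 : τ * D1 ≤ τ * (D2 + 1 / lam * P + τ * (Q / (2 * lam))) := by
      have : 1 / (2 * lam) * (A + 2 * τ * P + τ ^ 2 * Q) =
        1 / (2 * lam) * A + τ * (1 / lam * P) + τ * (τ * (Q / (2 * lam))) := by
        field_simp
      rw [this] at hmin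
      change _ ≤ _ at HH
      simp only [← hAd] at hmin
      linarith
    exact le_of_mul_le_mul_left e1 h0
  have hc : Tendsto (fun τ : ℝ => D2 + 1 / lam * P + τ * (Q / (2 * lam))) (nhdsWithin 0 (Ioi 0))
      (nhds (D2 + 1 / lam * P + 0 * (Q / (2 * lam)))) := by
    apply Tendsto.mono_left _ nhdsWithin_le_nhds
    apply Continuous.tendsto
    fun_prop
  rw [zero_mul, add_zero] at hc
  refine ge_of_tendsto hc ?_
  filter_upwards [Ioo_mem_nhdsGT (show (0:ℝ) < 1 by norm_num)] with τ hτ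
  exact main τ hτ.1 hτ.2.le

def rofZ (lam a b : ℝ) (g u : ℝ → EuclideanSpace ℝ (Fin n)) (x : ℝ) : EuclideanSpace ℝ (Fin n) :=
  ∫ y in a..x, rofF lam a b g u y

theorem rofZ_sub (hf : Integrable (rofF lam a b g u)) (p q : ℝ) :
    rofZ lam a b g u q - rofZ lam a b g u p = ∫ x in p..q, rofF lam a b g u x :=
  intervalIntegral.integral_interval_sub_left hf.intervalIntegrable hf.intervalIntegrable

theorem rof_inner_const (hf : Integrable (rofF lam a b g u)) (p q : ℝ)
    (v : EuclideanSpace ℝ (Fin n)) :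
    ∫ x in p..q, inner ℝ (rofF lam a b g u x) v =
      inner ℝ (rofZ lam a b g u q - rofZ lam a b g u p) v := by
  rw [rofZ_sub hf, intervalIntegral.intervalIntegral_eq_integral_uIoc,
    intervalIntegral.intervalIntegral_eq_integral_uIoc, inner_smul_left, real_inner_comm,
    ← integral_inner hf.integrableOn]
  simp only [real_inner_comm v]
  simp

theorem rofZ_b (hab : a < b) (hlam : 0 < lam) (hgm : Measurable g) (hgs : SqIntOn g (Ioo a b))
    (hu : IsMinimizer lam a b g u) : rofZ lam a b g u b = 0 := by
  have hf := rofF_integrable hgm hgs hu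
  have h := rof_first_order hlam hgm hgs hu (fun _ => -rofZ lam a b g u b) measurable_const _
    (fun _ => le_rfl) 0 0 le_rfl le_rfl (by
      intro τ _ _
      gcongr
      refine (rof_eV_le_mul (u := u) 1 fun x _ y _ => ?_).trans (by rw [one_mul])
      rw [edist_add_right, one_mul])
  rw [← integral_Ioc_eq_integral_Ioo, ← intervalIntegral.integral_of_le hab.le,
    rof_inner_const hf, inner_neg_right, zero_add] at h
  have h0 : rofZ lam a b g u a = 0 := intervalIntegral.integral_same
  rw [h0, sub_zero, real_inner_self_eq_norm_sq] at h
  have : ‖rofZ lam a b g u b‖ ^ 2 ≤ 0 := by linarith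
  simpa using this

theorem rof_inner_int (hf : Integrable (rofF lam a b g u))
    (φ : ℝ → EuclideanSpace ℝ (Fin n)) (hφ : Measurable φ)
    (C : ℝ) (hC : ∀ x, ‖φ x‖ ≤ C) :
    Integrable fun x => (inner ℝ (rofF lam a b g u x) (φ x) : ℝ) := by
  refine (hf.norm.mul_const C).mono' (hf.1.inner hφ.aestronglyMeasurable)
    (Eventually.of_forall fun x => ?_)
  exact (norm_inner_le_norm _ _).trans (mul_le_mul_of_nonneg_left (hC x) (norm_nonneg _))

theorem rofZ_le (hlam : 0 < lam) (hgm : Measurable g) (hgs : SqIntOn g (Ioo a b))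
    (hu : IsMinimizer lam a b g u) (x : ℝ) (hx : x ∈ Ioo a b) : ‖rofZ lam a b g u x‖ ≤ 1 := by
  have hab := hx.1.trans hx.2
  have hf := rofF_integrable hgm hgs hu
  set v := rofZ lam a b g u x with hv
  set st : ℝ → ℝ := fun y => if y ≤ x then 0 else 1 with hst
  have hmono : Monotone st := by
    intro y z hyz
    simp only [hst]
    split_ifs <;> first | linarith | norm_num
  have hVst : eVariationOn st (Ioo a b) ≤ 1 := by
    have := (hmono.monotoneOn univ).eVariationOn_eq (mem_univ a) (mem_univ b)
    refine (eVariationOn.mono st ?_).trans (this.le.trans ?_)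
    · exact fun y hy => ⟨trivial, hy.1.le, hy.2.le⟩
    · rw [← ENNReal.ofReal_one]
      apply ENNReal.ofReal_le_ofReal
      simp only [hst]
      rw [if_pos hx.1.le, if_neg (not_le.2 hx.2)]; norm_num
  have hφm : Measurable (fun y => st y • v) := hmono.measurable.smul_const v
  have hφC : ∀ y, ‖st y • v‖ ≤ ‖v‖ := by
    intro y
    simp only [hst]
    split_ifs <;> simp
  have h := rof_first_order hlam hgm hgs hu (fun y => st y • v) hφm ‖v‖ hφC
    0 ‖v‖ le_rfl (norm_nonneg _) (by
      intro τ h0 _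
      rw [mul_zero, ENNReal.ofReal_zero, add_zero]
      refine (rof_eV_add _ _ _).trans ?_
      gcongr
      refine (rof_eV_le_mul (u := st) (ENNReal.ofReal (τ * ‖v‖)) fun y _ z _ => ?_).trans
        ((mul_le_mul_right hVst _).trans (by rw [mul_one]))
      rw [edist_dist, edist_dist, ← ENNReal.ofReal_mul (by positivity)]
      apply ENNReal.ofReal_le_ofReal
      rw [dist_eq_norm, dist_eq_norm, ← smul_sub, ← sub_smul, norm_smul, norm_smul,
        Real.norm_eq_abs τ, abs_of_pos h0]
      apply le_of_eq; ring)
  have hI := rof_inner_int hf _ hφm _ hφC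
  rw [← integral_Ioc_eq_integral_Ioo, ← intervalIntegral.integral_of_le hab.le,
    ← intervalIntegral.integral_add_adjacent_intervals (b := x) hI.intervalIntegrable
      hI.intervalIntegrable] at h
  have e1 : ∫ y in a..x, inner ℝ (rofF lam a b g u y) (st y • v) = 0 := by
    rw [intervalIntegral.integral_of_le hx.1.le]
    rw [setIntegral_congr_fun (g := fun _ => (0:ℝ)) measurableSet_Ioc]
    · simp
    · intro y hy
      simp only [hst]
      rw [if_pos hy.2]; simp
  have e2 : ∫ y in x..b, inner ℝ (rofF lam a b g u y) (st y • v) =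
      ∫ y in x..b, inner ℝ (rofF lam a b g u y) v := by
    rw [intervalIntegral.integral_of_le hx.2.le, intervalIntegral.integral_of_le hx.2.le]
    refine setIntegral_congr_fun measurableSet_Ioc fun y hy => ?_
    simp only [hst]
    rw [if_neg (not_le.2 hy.1)]; simp
  rw [e1, e2, rof_inner_const hf, rofZ_b hab hlam hgm hgs hu, zero_sub, inner_neg_left, ← hv,
    real_inner_self_eq_norm_sq] at h
  by_contra hc
  push Not at hc
  nlinarith

theorem rof_K (hlam : 0 < lam) (hgm : Measurable g) (hgs : SqIntOn g (Ioo a b))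
    (hu : IsMinimizer lam a b g u) {s t : ℝ} (hs : a < s) (hst : s ≤ t) (ht : t < b)
    {ξ : ℝ} (hξ : ξ ∈ Icc s t) :
    (eVariationOn u (Icc s t)).toReal * (1 - 2 * ∫ x in s..t, ‖rofF lam a b g u x‖) ≤
      inner ℝ (rofZ lam a b g u ξ) (u t - u s) := by
  have hab : a < b := by linarith
  have hf := rofF_integrable hgm hgs hu
  have hbv : BoundedVariationOn u (Icc s t) := BoundedVariationOn.mono (rof_finite hu)
    (fun x hx => ⟨hs.trans_le hx.1, hx.2.trans_lt ht⟩)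
  set W := (eVariationOn u (Icc s t)).toReal with hW
  have hW0 : 0 ≤ W := ENNReal.toReal_nonneg
  have hdist : ∀ x ∈ Icc s t, ‖u s - u x‖ ≤ W := fun x hx => by
    rw [← dist_eq_norm]; exact hbv.dist_le ⟨le_rfl, hst⟩ hx
  set φ : ℝ → EuclideanSpace ℝ (Fin n) := fun y =>
    if y ≤ s then 0 else if y ≤ t then u s - u y else u s - u t with hφ
  have hφm : Measurable φ := by
    refine Measurable.ite measurableSet_Iic measurable_const ?_
    exact Measurable.ite measurableSet_Iic (measurable_const.sub hu.1) measurable_const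
  have hφC : ∀ y, ‖φ y‖ ≤ W := by
    intro y
    simp only [hφ]
    split_ifs with h1 h2
    · simpa using hW0
    · exact hdist y ⟨(not_le.1 h1).le, h2⟩
    · exact hdist t ⟨hst, le_rfl⟩
  have p1 : ∀ y ∈ Ioc a s, φ y = 0 := fun y hy => if_pos hy.2
  have p2 : ∀ y ∈ Icc s t, φ y = u s - u y := by
    intro y hy
    simp only [hφ]
    split_ifs with h1 h2
    · rw [le_antisymm h1 hy.1, sub_self]
    · rfl
    · exact absurd hy.2 h2
  have p3 : ∀ y, t ≤ y → φ y = u s - u t := by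
    intro y hy
    rcases hy.eq_or_lt with h | h
    · rw [← h]; exact p2 t ⟨hst, le_rfl⟩
    · simp only [hφ]
      rw [if_neg (by linarith), if_neg (by linarith)]
  have h := rof_first_order hlam hgm hgs hu φ hφm W hφC W 0 hW0 le_rfl (by
      intro τ h0 h1
      rw [mul_zero, ENNReal.ofReal_zero, add_zero, rof_eV_split _ hs hst ht,
        rof_eV_split u hs hst ht]
      have q1 : eVariationOn (fun x => u x + τ • φ x) (Ioc a s) ≤ eVariationOn u (Ioc a s) :=
        (eVariationOn.eq_of_eqOn fun y hy => by simp [p1 y hy]).le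
      have q2 : eVariationOn (fun x => u x + τ • φ x) (Icc s t) ≤
          ENNReal.ofReal (1 - τ) * eVariationOn u (Icc s t) := by
        refine rof_eV_le_mul _ fun x hx y hy => ?_
        rw [p2 x hx, p2 y hy, edist_dist, edist_dist, ← ENNReal.ofReal_mul (by linarith)]
        apply ENNReal.ofReal_le_ofReal
        rw [dist_eq_norm, dist_eq_norm,
          show u x + τ • (u s - u x) - (u y + τ • (u s - u y)) = (1 - τ) • (u x - u y) by module,
          norm_smul, Real.norm_eq_abs, abs_of_nonneg (by linarith)]
      have q3 : eVariationOn (fun x => u x + τ • φ x) (Ico t b) ≤ eVariationOn u (Ico t b) := by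
        refine (rof_eV_le_mul (u := u) 1 fun x hx y hy => ?_).trans (by rw [one_mul])
        rw [p3 x hx.1, p3 y hy.1, edist_add_right, one_mul]
      have q4 : ENNReal.ofReal (1 - τ) * eVariationOn u (Icc s t) + ENNReal.ofReal (τ * W) =
          eVariationOn u (Icc s t) := by
        rw [ENNReal.ofReal_mul h0.le, hW, ENNReal.ofReal_toReal hbv, ← add_mul,
          ← ENNReal.ofReal_add (by linarith) h0.le]
        simp
      calc _ ≤ eVariationOn u (Ioc a s) + ENNReal.ofReal (1 - τ) * eVariationOn u (Icc s t)
            + eVariationOn u (Ico t b) + ENNReal.ofReal (τ * W) := by gcongr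
        _ = eVariationOn u (Ioc a s) + (ENNReal.ofReal (1 - τ) * eVariationOn u (Icc s t)
            + ENNReal.ofReal (τ * W)) + eVariationOn u (Ico t b) := by ring
        _ = _ := by rw [q4])
  have hI := rof_inner_int hf _ hφm _ hφC
  rw [← integral_Ioc_eq_integral_Ioo, ← intervalIntegral.integral_of_le hab.le,
    ← intervalIntegral.integral_add_adjacent_intervals (b := t) hI.intervalIntegrable
      hI.intervalIntegrable,
    ← intervalIntegral.integral_add_adjacent_intervals (b := s) hI.intervalIntegrable
      hI.intervalIntegrable] at h
  have e1 : ∫ y in a..s, inner ℝ (rofF lam a b g u y) (φ y) = 0 := by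
    rw [intervalIntegral.integral_of_le hs.le]
    rw [setIntegral_congr_fun (g := fun _ => (0:ℝ)) measurableSet_Ioc]
    · simp
    · intro y hy
      simp only [p1 y hy]; simp
  have e2 : ∫ y in t..b, inner ℝ (rofF lam a b g u y) (φ y) =
      ∫ y in t..b, inner ℝ (rofF lam a b g u y) (u s - u t) := by
    rw [intervalIntegral.integral_of_le ht.le, intervalIntegral.integral_of_le ht.le]
    refine setIntegral_congr_fun measurableSet_Ioc fun y hy => ?_
    simp only [p3 y hy.1.le]
  have e3 : ∫ y in s..t, inner ℝ (rofF lam a b g u y) (φ y) ≤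
      (∫ y in s..t, ‖rofF lam a b g u y‖) * W := by
    rw [← intervalIntegral.integral_mul_const]
    refine intervalIntegral.integral_mono hst hI.intervalIntegrable
      (hf.norm.mul_const W).intervalIntegrable fun y => ?_
    exact (real_inner_le_norm _ _).trans (mul_le_mul_of_nonneg_left (hφC y) (norm_nonneg _))
  rw [e1, e2, rof_inner_const hf, rofZ_b hab hlam hgm hgs hu, zero_sub, inner_neg_left,
    ← inner_neg_right, neg_sub] at h
  have e4 : inner ℝ (rofZ lam a b g u t - rofZ lam a b g u ξ) (u t - u s) ≤
      (∫ y in s..t, ‖rofF lam a b g u y‖) * W := by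
    refine (real_inner_le_norm _ _).trans (mul_le_mul ?_ ?_ (norm_nonneg _) ?_)
    · rw [rofZ_sub hf]
      refine (intervalIntegral.norm_integral_le_integral_norm hξ.2).trans ?_
      exact intervalIntegral.integral_mono_interval hξ.1 hξ.2 le_rfl
        (Eventually.of_forall fun _ => norm_nonneg _) hf.norm.intervalIntegrable
    · rw [norm_sub_rev]; exact hdist t ⟨hst, le_rfl⟩
    · exact intervalIntegral.integral_nonneg hst fun _ _ => norm_nonneg _
  rw [inner_sub_left] at e4
  linarith

theorem rof_step (hlam : 0 < lam) (hgm : Measurable g) (hgs : SqIntOn g (Ioo a b))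
    (hu : IsMinimizer lam a b g u) {c d : ℝ} (hJ : Ioo c d ⊆ Ioo a b) :
    eVariationOn u (Ioo c d) ≤ eVariationOn g (Ioo c d) := by
  by_cases hg : eVariationOn g (Ioo c d) = ⊤
  · rw [hg]; exact le_top
  rw [eVariationOn.eq_biSup_inter_Icc]
  refine iSup₂_le ?_
  rintro ⟨x, y⟩ ⟨hx, hy, hxy⟩
  simp only at hx hy hxy ⊢
  have hub : BoundedVariationOn u (Ioo c d) := BoundedVariationOn.mono (rof_finite hu) hJ
  have hul := hub.locallyBoundedVariationOn
  have hgb : BoundedVariationOn g (Ioo c d) := hg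
  have hgl := hgb.locallyBoundedVariationOn
  have S : RofSetup u g (rofF lam a b g u) (rofZ lam a b g u)
      (variationOnFromTo u (Ioo c d) x) (variationOnFromTo g (Ioo c d) x) lam c d := by
    refine ⟨hlam, rofF_integrable hgm hgs hu, ?_, ?_, ?_, ?_, ?_, ?_⟩
    · intro z hz
      rw [rofF, indicator_of_mem (hJ hz), smul_smul, mul_one_div_cancel hlam.ne', one_smul]
    · exact rofZ_sub (rofF_integrable hgm hgs hu)
    · exact fun z hz => rofZ_le hlam hgm hgs hu z (hJ hz)
    · intro s hs t ht hst
      rw [variationOnFromTo.sub_right hul hx ht hs, variationOnFromTo.eq_of_le _ _ hst,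
        ← dist_eq_norm]
      exact (hub.mono inter_subset_left).dist_le ⟨ht, hst, le_rfl⟩ ⟨hs, le_rfl, hst⟩
    · intro s hs t ht hst
      rw [variationOnFromTo.sub_right hgl hx ht hs, variationOnFromTo.eq_of_le _ _ hst,
        ← dist_eq_norm]
      exact (hgb.mono inter_subset_left).dist_le ⟨ht, hst, le_rfl⟩ ⟨hs, le_rfl, hst⟩
    · intro s hs t ht ξ hξ
      have hst := hξ.1.trans hξ.2
      have hsub : Icc s t ⊆ Ioo c d := fun z hz => ⟨hs.1.trans_le hz.1, hz.2.trans_lt ht.2⟩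
      rw [variationOnFromTo.sub_right hul hx ht hs, variationOnFromTo.eq_of_le _ _ hst,
        inter_eq_self_of_subset_right hsub]
      exact rof_K hlam hgm hgs hu (hJ hs).1 hst (hJ ht).2 hξ
  have hm := S.main (c' := (c + x) / 2) (x := x) (y := y) (d' := (y + d) / 2)
    (by linarith [hx.1]) (by linarith [hx.1]) hxy (by linarith [hy.2]) (by linarith [hy.2])
  have hc' : (c + x) / 2 ∈ Ioo c d := ⟨by linarith [hx.1], by linarith [hx.1, hx.2]⟩
  have hd' : (y + d) / 2 ∈ Ioo c d := ⟨by linarith [hy.1, hy.2], by linarith [hy.2]⟩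
  rw [variationOnFromTo.sub_right hul hx hy hx, variationOnFromTo.eq_of_le _ _ hxy,
    variationOnFromTo.sub_right hgl hx hd' hc'] at hm
  have h2 := hm.trans ((le_abs_self _).trans (variationOnFromTo.abs_le_eVariationOn hgb))
  exact (ENNReal.toReal_le_toReal (hub.mono inter_subset_left) hg).1 h2

end Min

/-- along the resolvent iterates of the total variation flow
(`u_{k+1}` minimizes the ROF energy with datum `u_k`), the total variation over any open
subinterval `J = Ioo c d ⊆ I` does not increase: `eVariationOn u_k J ≤ eVariationOn u₀ J`. -/
theorem tv_nonincreasing_along_resolvent_iterates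
    {n : ℕ} (hn : 1 ≤ n) (a b : ℝ) (hab : a < b) (lam : ℝ) (hlam : 0 < lam)
    (useq : ℕ → ℝ → EuclideanSpace ℝ (Fin n))
    (h0_meas : Measurable (useq 0)) (h0_sq : SqIntOn (useq 0) (Set.Ioo a b))
    (hiter : ∀ k : ℕ, IsMinimizer lam a b (useq k) (useq (k + 1)))
    (c d : ℝ) (hJ : Set.Ioo c d ⊆ Set.Ioo a b) (k : ℕ) :
    eVariationOn (useq k) (Set.Ioo c d) ≤ eVariationOn (useq 0) (Set.Ioo c d) := by
  have hms : ∀ j, Measurable (useq j) ∧ SqIntOn (useq j) (Set.Ioo a b) := by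
    intro j
    cases j with
    | zero => exact ⟨h0_meas, h0_sq⟩
    | succ j => exact ⟨(hiter j).1, (hiter j).2.1⟩
  induction k with
  | zero => exact le_rfl
  | succ k ih => exact (rof_step hlam (hms k).1 (hms k).2 (hiter k) hJ).trans ih
end
end
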